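/- Every finite simple cubic graph G admits a normal 7-edge-coloring; that is, χ'_N(G) ≤ 7. -/

import Mathlib

open SimpleGraph

/-- A proper edge-coloring: distinct edges of `G` sharing an endpoint get different colors. -/
def IsProperEdgeColoring {V C : Type*} (G : SimpleGraph V) (c : Sym2 V → C) : Prop :=
  ∀ e ∈ G.edgeSet, ∀ f ∈ G.edgeSet, e ≠ f → (∃ v : V, v ∈ e ∧ v ∈ f) → c e ≠ c f

/-- `S_c(v)`: the set of colors appearing on edges incident to `v`. -/
def colorSet {V C : Type*} (G : SimpleGraph V) (c : Sym2 V → C) (v : V) : Set C :=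
  c '' G.incidenceSet v

/-- The edge `uv` is poor: exactly 3 colors appear around its endpoints. -/
def IsPoorAt {V C : Type*} (G : SimpleGraph V) (c : Sym2 V → C) (u v : V) : Prop :=
  (colorSet G c u ∪ colorSet G c v).ncard = 3

/-- The edge `uv` is rich: exactly 5 colors appear around its endpoints. -/
def IsRichAt {V C : Type*} (G : SimpleGraph V) (c : Sym2 V → C) (u v : V) : Prop :=
  (colorSet G c u ∪ colorSet G c v).ncard = 5

/-- A normal edge-coloring: a proper edge-coloring in which every edge is poor or rich. -/
def IsNormalEdgeColoring {V C : Type*} (G : SimpleGraph V) (c : Sym2 V → C) : Prop :=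
  IsProperEdgeColoring G c ∧
    ∀ u v : V, G.Adj u v → IsPoorAt G c u v ∨ IsRichAt G c u v

/-- A nowhere-zero flow with values in an additive group `M` (all elements self-inverse in our
applications): nonzero on every edge, and at every vertex the values on incident edges sum to 0. -/
def IsNowhereZeroFlow {V M : Type*} [AddCommMonoid M] (G : SimpleGraph V)
    (θ : Sym2 V → M) : Prop :=
  (∀ e ∈ G.edgeSet, θ e ≠ 0) ∧ ∀ v : V, ∑ᶠ e ∈ G.incidenceSet v, θ e = 0

/-- `G` is `k`-edge-connected: connected, and still connected after deleting any set of
fewer than `k` edges. -/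
def EdgeConnGe {V : Type*} (G : SimpleGraph V) (k : ℕ) : Prop :=
  G.Connected ∧ ∀ s : Set (Sym2 V), s.ncard < k → (G.deleteEdges s).Connected

/-- `G` is cubic: every vertex has degree 3. -/
def IsCubic {V : Type*} (G : SimpleGraph V) : Prop :=
  ∀ v : V, (G.neighborSet v).ncard = 3

/-- `G` is bridgeless: no edge is a bridge. -/
def Bridgeless {V : Type*} (G : SimpleGraph V) : Prop :=
  ∀ e ∈ G.edgeSet, ¬ G.IsBridge e

set_option linter.unusedSectionVars false

namespace NC

section basics
variable {V : Type*} [Fintype V] [DecidableEq V] (G : SimpleGraph V) [DecidableRel G.Adj]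
variable {M : Type*} [AddCommMonoid M]

/-- Sum of `f` over all edges between `A` and `B` (ordered pairs). -/
def bs (f : Sym2 V → M) (A B : Finset V) : M :=
  ∑ v ∈ A, ∑ w ∈ B, if G.Adj v w then f s(v, w) else 0

/-- number of edges between `A` and `B` -/
def ec (A B : Finset V) : ℕ := bs G (fun _ => (1 : ℕ)) A B

/-- size of the boundary -/
def dd (A : Finset V) : ℕ := ec G A Aᶜ

variable {G}

lemma bs_union_left (f : Sym2 V → M) {A A' : Finset V} (B : Finset V) (h : Disjoint A A') :
    bs G f (A ∪ A') B = bs G f A B + bs G f A' B := by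
  unfold bs; rw [Finset.sum_union h]

lemma bs_comm (f : Sym2 V → M) (A B : Finset V) : bs G f A B = bs G f B A := by
  unfold bs; rw [Finset.sum_comm]
  refine Finset.sum_congr rfl fun x _ => Finset.sum_congr rfl fun y _ => ?_
  simp only [G.adj_comm y x, Sym2.eq_swap (a := y) (b := x)]

lemma bs_union_right (f : Sym2 V → M) (A : Finset V) {B B' : Finset V} (h : Disjoint B B') :
    bs G f A (B ∪ B') = bs G f A B + bs G f A B' := by
  rw [bs_comm, bs_union_left f A h, bs_comm f B, bs_comm f B']

lemma bs_congr {f g : Sym2 V → M} {A B : Finset V}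
    (h : ∀ v ∈ A, ∀ w ∈ B, G.Adj v w → f s(v, w) = g s(v, w)) : bs G f A B = bs G g A B := by
  unfold bs
  refine Finset.sum_congr rfl fun x hx => Finset.sum_congr rfl fun y hy => ?_
  split_ifs with hh
  · exact h x hx y hy hh
  · rfl

lemma bs_add (f g : Sym2 V → M) (A B : Finset V) :
    bs G (fun e => f e + g e) A B = bs G f A B + bs G g A B := by
  unfold bs
  simp only [← Finset.sum_add_distrib]
  refine Finset.sum_congr rfl fun x hx => Finset.sum_congr rfl fun y hy => ?_
  split_ifs <;> simp

lemma bs_zero {f : Sym2 V → M} {A B : Finset V}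
    (h : ∀ v ∈ A, ∀ w ∈ B, G.Adj v w → f s(v, w) = 0) : bs G f A B = 0 := by
  unfold bs
  refine Finset.sum_eq_zero fun x hx => Finset.sum_eq_zero fun y hy => ?_
  split_ifs with hh
  · exact h x hx y hy hh
  · rfl

lemma bs_map {N : Type*} [AddCommMonoid N] (g : M →+ N) (f : Sym2 V → M) (A B : Finset V) :
    bs G (fun e => g (f e)) A B = g (bs G f A B) := by
  unfold bs
  simp only [map_sum]
  refine Finset.sum_congr rfl fun x hx => Finset.sum_congr rfl fun y hy => ?_
  split_ifs <;> simp

lemma bs_sum {ι : Type*} (s : Finset ι) (f : ι → Sym2 V → M) (A B : Finset V) :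
    bs G (fun e => ∑ i ∈ s, f i e) A B = ∑ i ∈ s, bs G (f i) A B := by
  classical
  induction s using Finset.induction_on with
  | empty => simp [bs]
  | insert a s ha ih => simp only [Finset.sum_insert ha, bs_add, ih]

lemma bs_eq_sum (f : Sym2 V → M) (A B : Finset V) :
    bs G f A B = ∑ v ∈ A, bs G f {v} B := by
  unfold bs; simp

lemma bs_self (h2 : ∀ m : M, m + m = 0) (f : Sym2 V → M) (A : Finset V) : bs G f A A = 0 := by
  induction A using Finset.induction_on with
  | empty => simp [bs]
  | insert a s ha ih =>
    have hd : Disjoint ({a} : Finset V) s := by simpa using ha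
    rw [Finset.insert_eq, bs_union_left _ _ hd, bs_union_right _ _ hd, bs_union_right _ _ hd, ih,
      bs_comm f s {a}]
    have : bs G f {a} {a} = 0 := by simp [bs]
    rw [this, zero_add, add_zero, h2]

/-- indicator -/
lemma bs_single (m : M) {A B : Finset V} {x y : V} (hx : x ∈ A) (hy : y ∈ B) (hyA : y ∉ A)
    (hxy : G.Adj x y) : bs G (fun e => if e = s(x, y) then m else 0) A B = m := by
  unfold bs
  rw [Finset.sum_eq_single x, Finset.sum_eq_single y]
  · simp [hxy]
  · intro b hb hne
    have : s(x, b) ≠ s(x, y) := by simp; exact ⟨hne, fun h h2 => hne (h2.trans h)⟩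
    simp [this]
  · intro h; exact absurd hy h
  · intro b hb hne
    refine Finset.sum_eq_zero fun z hz => ?_
    have : s(b, z) ≠ s(x, y) := by
      intro h
      rw [Sym2.eq_iff] at h
      rcases h with h | h
      · exact hne h.1
      · exact hyA (h.1 ▸ hb)
    simp [this]
  · intro h; exact absurd hx h

lemma ec_eq_card (A B : Finset V) :
    ec G A B = ((A ×ˢ B).filter (fun p => G.Adj p.1 p.2)).card := by
  unfold ec bs
  rw [Finset.card_filter, Finset.sum_product]

lemma ec_comm (A B : Finset V) : ec G A B = ec G B A := bs_comm _ _ _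

lemma ec_ge (A B : Finset V) (S : Finset (V × V))
    (h : ∀ p ∈ S, p.1 ∈ A ∧ p.2 ∈ B ∧ G.Adj p.1 p.2) : S.card ≤ ec G A B := by
  rw [ec_eq_card]
  refine Finset.card_le_card fun p hp => ?_
  have := h p hp
  simp [this]

lemma ec_le (A B : Finset V) (S : Finset (V × V))
    (h : ∀ x ∈ A, ∀ y ∈ B, G.Adj x y → (x, y) ∈ S) : ec G A B ≤ S.card := by
  rw [ec_eq_card]
  refine Finset.card_le_card fun p hp => ?_
  simp only [Finset.mem_filter, Finset.mem_product] at hp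
  exact h p.1 hp.1.1 p.2 hp.1.2 hp.2

/-- if there are more edges than `S`, then there is an edge outside `S` -/
lemma ec_gt (A B : Finset V) (S : Finset (V × V)) (h : S.card < ec G A B) :
    ∃ x ∈ A, ∃ y ∈ B, G.Adj x y ∧ (x, y) ∉ S := by
  by_contra hcon
  push Not at hcon
  exact absurd (ec_le A B S hcon) (by omega)

lemma ec_le_one {A B : Finset V} (h : ec G A B ≤ 1) {x y x' y' : V} (hx : x ∈ A) (hy : y ∈ B)
    (hxy : G.Adj x y) (hx' : x' ∈ A) (hy' : y' ∈ B) (hxy' : G.Adj x' y') : x = x' ∧ y = y' := by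
  by_contra hcon
  have := ec_ge (G := G) A B {(x, y), (x', y')} (by
    intro p hp
    simp only [Finset.mem_insert, Finset.mem_singleton] at hp
    rcases hp with rfl | rfl
    · exact ⟨hx, hy, hxy⟩
    · exact ⟨hx', hy', hxy'⟩)
  rw [Finset.card_pair (by simpa using hcon)] at this
  omega

lemma ec_union_left {A A' : Finset V} (B : Finset V) (h : Disjoint A A') :
    ec G (A ∪ A') B = ec G A B + ec G A' B := bs_union_left _ _ h

lemma ec_union_right (A : Finset V) {B B' : Finset V} (h : Disjoint B B') :
    ec G A (B ∪ B') = ec G A B + ec G A B' := bs_union_right _ _ h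

lemma dd_union {A B : Finset V} (h : Disjoint A B) :
    dd G A + dd G B = dd G (A ∪ B) + 2 * ec G A B := by
  unfold dd
  have h1 : Aᶜ = B ∪ (A ∪ B)ᶜ := by
    ext x; have h0 := Finset.disjoint_left.mp h; have := @h0 x; simp; tauto
  have h2 : Bᶜ = A ∪ (A ∪ B)ᶜ := by
    ext x; have h0 := Finset.disjoint_left.mp h; have := @h0 x; simp; tauto
  have d1 : Disjoint B (A ∪ B)ᶜ := by
    rw [Finset.disjoint_left]; intro x; simp; tauto
  have d2 : Disjoint A (A ∪ B)ᶜ := by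
    rw [Finset.disjoint_left]; intro x; simp; tauto
  rw [h1, h2, ec_union_right _ d1, ec_union_right _ d2, ec_union_left _ h, ec_comm B A]
  omega

lemma dd_sub {A X : Finset V} (h : A ⊆ X) :
    dd G A = ec G A (X \ A) + ec G A Xᶜ := by
  unfold dd
  have h1 : Aᶜ = (X \ A) ∪ Xᶜ := by
    ext x; have := @h x; simp; tauto
  have d1 : Disjoint (X \ A) Xᶜ := by
    rw [Finset.disjoint_left]; intro x; simp; tauto
  rw [h1, ec_union_right _ d1]

lemma ec_mono {A A' B B' : Finset V} (h : A ⊆ A') (h' : B ⊆ B') : ec G A B ≤ ec G A' B' := by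
  rw [ec_eq_card, ec_eq_card]
  exact Finset.card_le_card (Finset.filter_subset_filter _ (Finset.product_subset_product h h'))

/-- flow sums over cuts vanish -/
lemma cutsum (h2 : ∀ m : M, m + m = 0) {f : Sym2 V → M} {K : Finset V}
    (h : ∀ v ∈ K, bs G f {v} Finset.univ = 0) : bs G f K Kᶜ = 0 := by
  have h1 : bs G f K Finset.univ = 0 := by
    rw [bs_eq_sum]; exact Finset.sum_eq_zero h
  have : (Finset.univ : Finset V) = K ∪ Kᶜ := by simp
  rw [this, bs_union_right _ _ (disjoint_compl_right), bs_self h2, zero_add] at h1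
  exact h1

end basics
end NC

set_option linter.unusedSectionVars false
namespace NC
section menger
variable {V : Type*} [Fintype V] [DecidableEq V] {G : SimpleGraph V} [DecidableRel G.Adj]
variable {M : Type*} [AddCommMonoid M]

lemma bs_pt_single (m : M) (x y v : V) (hxy : G.Adj x y) :
    bs G (fun e => if e = s(x, y) then m else 0) {v} Finset.univ
      = (if v = x then m else 0) + (if v = y then m else 0) := by
  have hne := hxy.ne
  by_cases h1 : v = x
  · subst h1
    rw [bs_single m (by simp) (by simp) (by simpa using hne.symm) hxy]
    simp [hne]
  · by_cases h2 : v = y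
    · subst h2
      have := bs_single m (A := {v}) (B := Finset.univ) (x := v) (y := x) (by simp) (by simp)
        (by simpa using hne) hxy.symm
      rw [Sym2.eq_swap] at this
      rw [this]; simp [h1]
    · rw [bs_zero]
      · simp [h1, h2]
      · intro u hu w _ _
        rw [Finset.mem_singleton] at hu
        subst hu
        rw [if_neg]
        rw [Sym2.eq_iff]
        tauto

lemma walk_sum (h2 : ∀ m : M, m + m = 0) {H : SimpleGraph V} (hH : H ≤ G) (m : M) {a b : V}
    (p : H.Walk a b) (v : V) :
    bs G (fun e => p.edges.count e • m) {v} Finset.univ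
      = (if v = a then m else 0) + (if v = b then m else 0) := by
  induction p with
  | nil => rw [bs_zero (by simp)]; split_ifs <;> simp [h2]
  | @cons u w x h p ih =>
    have : (fun e => (Walk.cons h p).edges.count e • m)
        = fun e => (if e = s(u, w) then m else 0) + p.edges.count e • m := by
      funext e
      rw [Walk.edges_cons, List.count_cons]
      by_cases he : e = s(u, w)
      · subst he; simp [add_smul, add_comm]
      · have he' : ¬ (s(u, w) = e) := fun h => he h.symm
        simp [he, he']
    rw [this, bs_add, ih, bs_pt_single m _ _ _ (hH h)]
    generalize (if v = u then m else 0) = A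
    generalize (if v = x then m else 0) = C
    rw [add_assoc, ← add_assoc _ _ C, h2, zero_add]

/-- first hit lemma -/
lemma first_hit {H : SimpleGraph V} (S : Set V) {b a : V} (R : H.Walk b a) (ha : a ∈ S)
    (hb : b ∉ S) : ∃ x ∈ S, ∃ R' : H.Walk b x, R'.IsPath ∧ ∀ e ∈ R'.edges, ∃ z ∈ e, z ∉ S := by
  induction R with
  | nil => exact absurd ha hb
  | @cons u w x h p ih =>
    by_cases hw : w ∈ S
    · refine ⟨w, hw, Walk.cons h Walk.nil, ?_, ?_⟩
      · simp [h.ne]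
      · intro e he
        simp at he
        subst he
        exact ⟨u, by simp, hb⟩
    · obtain ⟨y, hy, R', hR', hS⟩ := ih ha hw
      refine ⟨y, hy, (Walk.cons h R').bypass, Walk.bypass_isPath _, ?_⟩
      intro e he
      have := Walk.edges_bypass_subset_edges _ he
      rw [Walk.edges_cons, List.mem_cons] at this
      rcases this with rfl | h'
      · exact ⟨u, by simp, hb⟩
      · exact hS e h'

/-- graph `G` restricted to `X` -/
def rg (G : SimpleGraph V) (X : Finset V) : SimpleGraph V where
  Adj u v := G.Adj u v ∧ u ∈ X ∧ v ∈ X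
  symm := ⟨fun _ _ h => ⟨h.1.symm, h.2.2, h.2.1⟩⟩
  loopless := ⟨fun _ h => h.1.ne rfl⟩

lemma reach_of_cut {H : SimpleGraph V} {X : Finset V}
    (h : ∀ K ⊆ X, K.Nonempty → K ≠ X → ∃ u ∈ K, ∃ v ∈ X \ K, H.Adj u v) {a b : V}
    (ha : a ∈ X) (hb : b ∈ X) : H.Reachable a b := by
  classical
  by_contra hcon
  obtain ⟨u, hu, v, hv, huv⟩ := h (X.filter fun y => H.Reachable a y) (Finset.filter_subset _ _)
    ⟨a, by simp [ha]⟩ (by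
      intro h'
      have : b ∈ X.filter fun y => H.Reachable a y := by rw [h']; exact hb
      exact hcon (Finset.mem_filter.mp this).2)
  simp only [Finset.mem_sdiff, Finset.mem_filter, not_and] at hu hv
  exact hv.2 hv.1 (hu.2.trans huv.reachable)

/-- two edge-disjoint walks -/
lemma two_walks {X : Finset V}
    (hX : ∀ K ⊆ X, K.Nonempty → K ≠ X → 2 ≤ ec G K (X \ K)) {a : V} (ha : a ∈ X) :
    ∀ {b : V} (_ : (rg G X).Walk b a),
      ∃ p q : (rg G X).Walk a b, (p.edges ++ q.edges).Nodup := by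
  intro b w
  induction w with
  | nil => exact ⟨Walk.nil, Walk.nil, by simp⟩
  | @cons b b' a h _ ih =>
    obtain ⟨p, q, hpq⟩ := ih ha
    by_cases h1 : b ∈ p.support
    · refine ⟨p.takeUntil b h1, q.append (p.dropUntil b h1).reverse, ?_⟩
      have h3 : p.edges = (p.takeUntil b h1).edges ++ (p.dropUntil b h1).edges := by
        conv_lhs => rw [← p.take_spec h1]
        rw [Walk.edges_append]
      rw [h3] at hpq
      rw [Walk.edges_append, Walk.edges_reverse]
      refine (List.Perm.nodup_iff ?_).mp hpq
      rw [List.append_assoc]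
      refine List.Perm.append_left _ ?_
      refine List.perm_append_comm.trans (List.Perm.append_left _ ?_)
      exact (List.reverse_perm _).symm
    by_cases h2 : b ∈ q.support
    · refine ⟨p.append (q.dropUntil b h2).reverse, q.takeUntil b h2, ?_⟩
      have h3 : q.edges = (q.takeUntil b h2).edges ++ (q.dropUntil b h2).edges := by
        conv_lhs => rw [← q.take_spec h2]
        rw [Walk.edges_append]
      rw [h3] at hpq
      rw [Walk.edges_append, Walk.edges_reverse]
      refine (List.Perm.nodup_iff ?_).mp hpq
      rw [List.append_assoc]
      refine List.Perm.append_left _ ?_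
      refine List.perm_append_comm.trans (List.Perm.append_right _ ?_)
      exact (List.reverse_perm _).symm
    set H' : SimpleGraph V := (rg G X).deleteEdges {s(b, b')} with hH'
    have hreach : H'.Reachable b a := by
      refine reach_of_cut (X := X) ?_ h.2.1 ha
      intro K hK hne hKX
      have hc := hX K hK hne hKX
      by_cases hbK : b ∈ K
      · obtain ⟨x, hx, y, hy, hxy, hS⟩ := ec_gt (G := G) K (X \ K) {(b, b')} (by rw [Finset.card_singleton]; omega)
        refine ⟨x, hx, y, hy, ?_⟩
        rw [hH', deleteEdges_adj]
        refine ⟨⟨hxy, hK hx, (Finset.mem_sdiff.mp hy).1⟩, ?_⟩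
        simp only [Set.mem_singleton_iff, Sym2.eq_iff]
        rintro (⟨rfl, rfl⟩ | ⟨rfl, rfl⟩)
        · simp at hS
        · exact (Finset.mem_sdiff.mp hy).2 hbK
      · obtain ⟨x, hx, y, hy, hxy, hS⟩ := ec_gt (G := G) K (X \ K) {(b', b)} (by rw [Finset.card_singleton]; omega)
        refine ⟨x, hx, y, hy, ?_⟩
        rw [hH', deleteEdges_adj]
        refine ⟨⟨hxy, hK hx, (Finset.mem_sdiff.mp hy).1⟩, ?_⟩
        simp only [Set.mem_singleton_iff, Sym2.eq_iff]
        rintro (⟨rfl, rfl⟩ | ⟨rfl, rfl⟩)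
        · exact hbK hx
        · simp at hS
    obtain ⟨R⟩ := hreach
    obtain ⟨x, hx, R', hR', hS⟩ := first_hit {z | z ∈ p.support ∨ z ∈ q.support} R
      (by simp) (by simp [h1, h2])
    have hle : H' ≤ rg G X := deleteEdges_le _
    have hR1 : ∀ e ∈ R'.edges, e ∉ p.edges ∧ e ∉ q.edges := by
      intro e he
      obtain ⟨z, hz, hzS⟩ := hS e he
      simp only [Set.mem_ofPred_eq, not_or] at hzS
      exact ⟨fun h => hzS.1 (Walk.mem_support_of_mem_edges h hz),
        fun h => hzS.2 (Walk.mem_support_of_mem_edges h hz)⟩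
    have hR2 : s(b, b') ∉ R'.edges := by
      intro he
      have := Walk.edges_subset_edgeSet _ he
      rw [hH', mem_edgeSet, deleteEdges_adj] at this
      exact this.2 rfl
    have hR3 : R'.edges.Nodup := hR'.isTrail.edges_nodup
    have hj : s(b, b') ∉ p.edges ∧ s(b, b') ∉ q.edges :=
      ⟨fun h => h1 (Walk.mem_support_of_mem_edges h (by simp)),
        fun h => h2 (Walk.mem_support_of_mem_edges h (by simp))⟩
    have hmap : (R'.mapLe hle).edges = R'.edges := by simp
    rw [List.nodup_append] at hpq
    obtain ⟨hp, hq, hd⟩ := hpq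
    rcases hx with hx | hx
    · refine ⟨(p.takeUntil x hx).append (R'.mapLe hle).reverse,
        q.append (Walk.cons h.symm Walk.nil), ?_⟩
      have hsub := Walk.edges_takeUntil_subset_edges p hx
      have hsubn : (p.takeUntil x hx).edges.Nodup := by
        have h3 : p.edges = (p.takeUntil x hx).edges ++ (p.dropUntil x hx).edges := by
          conv_lhs => rw [← p.take_spec hx]
          rw [Walk.edges_append]
        rw [h3] at hp
        exact (List.nodup_append.mp hp).1
      simp only [Walk.edges_append, Walk.edges_reverse, hmap, Walk.edges_cons, Walk.edges_nil,
        List.nodup_append, List.nodup_reverse, List.mem_append, List.mem_reverse,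
        List.mem_singleton]
      rw [Sym2.eq_swap (a := b') (b := b)]
      refine ⟨⟨hsubn, hR3, ?_⟩, ⟨hq, by simp, ?_⟩, ?_⟩
      · rintro e he _ hf rfl; exact (hR1 e hf).1 (hsub he)
      · rintro e he _ rfl rfl; exact hj.2 he
      · rintro e (he | he) f (hf | rfl)
        · exact hd e (hsub he) f hf
        · rintro rfl; exact hj.1 (hsub he)
        · rintro rfl; exact (hR1 _ he).2 hf
        · rintro rfl; exact hR2 he
    · refine ⟨p.append (Walk.cons h.symm Walk.nil), (q.takeUntil x hx).append (R'.mapLe hle).reverse,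
        ?_⟩
      have hsub := Walk.edges_takeUntil_subset_edges q hx
      have hsubn : (q.takeUntil x hx).edges.Nodup := by
        have h3 : q.edges = (q.takeUntil x hx).edges ++ (q.dropUntil x hx).edges := by
          conv_lhs => rw [← q.take_spec hx]
          rw [Walk.edges_append]
        rw [h3] at hq
        exact (List.nodup_append.mp hq).1
      simp only [Walk.edges_append, Walk.edges_reverse, hmap, Walk.edges_cons, Walk.edges_nil,
        List.nodup_append, List.nodup_reverse, List.mem_append, List.mem_reverse,
        List.mem_singleton]
      rw [Sym2.eq_swap (a := b') (b := b)]
      refine ⟨⟨hp, by simp, ?_⟩, ⟨hsubn, hR3, ?_⟩, ?_⟩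
      · rintro e he _ rfl rfl; exact hj.1 he
      · rintro e he _ hf rfl; exact (hR1 e hf).2 (hsub he)
      · rintro e (he | rfl) f (hf | hf)
        · exact hd e he f (hsub hf)
        · rintro rfl; exact (hR1 _ hf).1 he
        · rintro rfl; exact hj.2 (hsub hf)
        · rintro rfl; exact hR2 hf

/-- graph of the support of `c0` -/
def cg (G : SimpleGraph V) (c0 : Sym2 V → ZMod 2) : SimpleGraph V where
  Adj u v := G.Adj u v ∧ c0 s(u, v) ≠ 0
  symm := ⟨fun u v h => ⟨h.1.symm, by rw [Sym2.eq_swap]; exact h.2⟩⟩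
  loopless := ⟨fun _ h => h.1.ne rfl⟩

/-- connected even subgraph on vertex set `D` -/
structure SC (G : SimpleGraph V) [DecidableRel G.Adj] (D : Finset V) (c0 : Sym2 V → ZMod 2) :
    Prop where
  supp : ∀ u v, G.Adj u v → c0 s(u, v) ≠ 0 → u ∈ D
  even : ∀ v, bs G c0 {v} Finset.univ = 0
  conn : ∀ x ∈ D, ∀ y ∈ D, (cg G c0).Reachable x y

lemma menger {X : Finset V}
    (hX : ∀ K ⊆ X, K.Nonempty → K ≠ X → 2 ≤ ec G K (X \ K)) {a b : V} (ha : a ∈ X) (hb : b ∈ X) :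
    ∃ D c0, D ⊆ X ∧ a ∈ D ∧ b ∈ D ∧ SC G D c0 := by
  have hr : (rg G X).Reachable b a := by
    refine reach_of_cut (X := X) ?_ hb ha
    intro K hK hne hKX
    obtain ⟨x, hx, y, hy, hxy, -⟩ := ec_gt (G := G) K (X \ K) ∅ (by
      have := hX K hK hne hKX
      rw [Finset.card_empty]; omega)
    exact ⟨x, hx, y, hy, hxy, hK hx, (Finset.mem_sdiff.mp hy).1⟩
  obtain ⟨w⟩ := hr
  obtain ⟨p, q, hpq⟩ := two_walks hX ha w
  have h2 : ∀ m : ZMod 2, m + m = 0 := by decide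
  have hle : rg G X ≤ G := fun _ _ h => h.1
  have hc0 : ∀ e, ((p.edges ++ q.edges).count e • (1 : ZMod 2) ≠ 0 ↔ e ∈ p.edges ++ q.edges) := by
    intro e
    by_cases he : e ∈ p.edges ++ q.edges
    · rw [List.count_eq_one_of_mem hpq he]; simp [he]
    · rw [List.count_eq_zero_of_not_mem he]; simp [he]
  have hadj : ∀ e ∈ p.edges ++ q.edges, ∃ u v, e = s(u, v) ∧ (cg G (fun e =>
      (p.edges ++ q.edges).count e • (1 : ZMod 2))).Adj u v := by
    intro e he
    have h1 : e ∈ (rg G X).edgeSet := by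
      rcases List.mem_append.mp he with h | h
      · exact Walk.edges_subset_edgeSet _ h
      · exact Walk.edges_subset_edgeSet _ h
    induction e with
    | _ u v => exact ⟨u, v, rfl, hle h1, (hc0 _).mpr he⟩
  have hcon : ∀ {x y : V} (r : (rg G X).Walk x y), (∀ e ∈ r.edges, e ∈ p.edges ++ q.edges) →
      ∀ z ∈ r.support, (cg G (fun e =>
      (p.edges ++ q.edges).count e • (1 : ZMod 2))).Reachable x z := by
    intro x y r
    induction r with
    | nil => intro _ z hz; simp at hz; subst hz; exact Reachable.refl _
    | @cons x y' y h r ih =>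
      intro hr z hz
      rw [Walk.support_cons, List.mem_cons] at hz
      rcases hz with rfl | hz
      · exact Reachable.refl _
      · have h1 : (cg G (fun e =>
          (p.edges ++ q.edges).count e • (1 : ZMod 2))).Adj x y' :=
          ⟨hle h, (hc0 _).mpr (hr _ (by simp))⟩
        exact h1.reachable.trans (ih (fun e he => hr e (by simp [he])) z hz)
  have hsX : ∀ {x y : V} (r : (rg G X).Walk x y), x ∈ X → ∀ z ∈ r.support, z ∈ X := by
    intro x y r
    induction r with
    | nil => intro h z hz; simp at hz; subst hz; exact h
    | @cons x y' y h r ih =>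
      intro hx z hz
      rw [Walk.support_cons, List.mem_cons] at hz
      rcases hz with rfl | hz
      · exact hx
      · exact ih h.2.2 z hz
  refine ⟨p.support.toFinset ∪ q.support.toFinset,
    fun e => (p.edges ++ q.edges).count e • (1 : ZMod 2), ?_, by simp, by simp, ?_, ?_, ?_⟩
  · intro z hz
    rcases (by simpa using hz : z ∈ p.support ∨ z ∈ q.support) with h | h
    · exact hsX p ha z h
    · exact hsX q ha z h
  · intro u v _ h
    rw [hc0] at h
    rcases List.mem_append.mp h with h | h
    · simp [Walk.mem_support_of_mem_edges h (by simp : u ∈ s(u, v))]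
    · simp [Walk.mem_support_of_mem_edges h (by simp : u ∈ s(u, v))]
  · intro v
    simp only [List.count_append, add_smul]
    rw [bs_add, walk_sum h2 hle, walk_sum h2 hle, h2]
  · have key : ∀ x ∈ p.support.toFinset ∪ q.support.toFinset, (cg G (fun e =>
      (p.edges ++ q.edges).count e • (1 : ZMod 2))).Reachable a x := by
      intro x hx
      rcases (by simpa using hx : x ∈ p.support ∨ x ∈ q.support) with h | h
      · exact hcon p (fun e he => by simp [he]) x h
      · exact hcon q (fun e he => by simp [he]) x h
    intro x hx y hy
    exact (key x hx).symm.trans (key y hy)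

/-- solving a boundary problem on the support of `c0` -/
lemma solve (h2 : ∀ m : M, m + m = 0) {D : Finset V} {c0 : Sym2 V → ZMod 2} (h : SC G D c0)
    (hD : D.Nonempty) (δ : V → M) (hδ : ∑ v ∈ D, δ v = 0) :
    ∃ ζ : Sym2 V → M, (∀ e, c0 e = 0 → ζ e = 0) ∧ ∀ v ∈ D, bs G ζ {v} Finset.univ = δ v := by
  obtain ⟨a, ha⟩ := hD
  have hw : ∀ x : V, ∃ f : Sym2 V → M, (∀ e, c0 e = 0 → f e = 0) ∧ (x ∈ D → ∀ v,
      bs G f {v} Finset.univ = (if v = a then δ x else 0) + (if v = x then δ x else 0)) := by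
    intro x
    by_cases hx : x ∈ D
    · obtain ⟨w⟩ := h.conn a ha x hx
      have hle : cg G c0 ≤ G := fun _ _ h => h.1
      refine ⟨fun e => w.edges.count e • δ x, ?_, fun _ v => walk_sum h2 hle _ w v⟩
      intro e he
      have : e ∉ w.edges := by
        intro h'
        have := Walk.edges_subset_edgeSet _ h'
        induction e with
        | _ u v => exact this.2 he
      simp [List.count_eq_zero_of_not_mem this]
    · exact ⟨fun _ => 0, by simp, fun h => absurd h hx⟩
  choose f hf0 hf using hw
  refine ⟨fun e => ∑ x ∈ D, f x e, fun e he => Finset.sum_eq_zero fun x _ => hf0 x e he, ?_⟩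
  intro v hv
  rw [bs_sum, Finset.sum_congr rfl fun x hx => hf x hx v, Finset.sum_add_distrib]
  have : ∑ x ∈ D, (if v = a then δ x else 0) = 0 := by
    split_ifs
    · exact hδ
    · simp
  rw [this, zero_add, Finset.sum_ite_eq, if_pos hv]
end menger
end NC

set_option linter.unusedSectionVars false
namespace NC

abbrev K4 := ZMod 2 × ZMod 2
abbrev T := ZMod 2 × K4

lemma k4_two (m : K4) : m + m = 0 := by revert m; decide
lemma t_two (m : T) : m + m = 0 := by revert m; decide

/-- linear maps of `K4` -/
def gm (a b : K4) : K4 →+ K4 where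
  toFun x := (x.1 * a.1 + x.2 * b.1, x.1 * a.2 + x.2 * b.2)
  map_zero' := by simp
  map_add' x y := by ext <;> simp <;> ring

lemma k4_aux1 : ∀ a b : K4, a ≠ 0 → b ≠ 0 → a ≠ b → ∀ x, gm a b x = 0 → x = 0 := by
  decide

lemma k4_aux2 : ∀ m1 m2 y y1 : K4, m1 ≠ 0 → m2 ≠ 0 → y ≠ 0 → y1 ≠ m1 →
    ∃ a b : K4, (a ≠ 0 ∧ b ≠ 0 ∧ a ≠ b) ∧ gm a b m2 = m1 ∧ gm a b y ≠ y1 := by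
  decide +kernel

lemma exists_g (m1 m2 y y1 : K4) (h1 : m1 ≠ 0) (h2 : m2 ≠ 0) (h3 : y ≠ 0) (h4 : y1 ≠ m1) :
    ∃ g : K4 →+ K4, (∀ x, g x = 0 → x = 0) ∧ g m2 = m1 ∧ g y ≠ y1 := by
  obtain ⟨a, b, h, h5⟩ := k4_aux2 m1 m2 y y1 h1 h2 h3 h4
  exact ⟨gm a b, k4_aux1 a b h.1 h.2.1 h.2.2, h5⟩

section rf
variable {V : Type*} [Fintype V] [DecidableEq V] {G : SimpleGraph V} [DecidableRel G.Adj]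

structure RF (G : SimpleGraph V) [DecidableRel G.Adj] (X : Finset V) (F : Sym2 V → T) : Prop where
  fl : ∀ v ∈ X, bs G F {v} Finset.univ = 0
  nz : ∀ v ∈ X, ∀ w, G.Adj v w → F s(v, w) ≠ 0
  bd : ∀ v ∈ X, ∀ w, G.Adj v w → w ∉ X → (F s(v, w)).1 = 0

lemma RF.bd2 {X : Finset V} {F : Sym2 V → T} (h : RF G X F) {v w : V} (hv : v ∈ X)
    (hvw : G.Adj v w) (hw : w ∉ X) : (F s(v, w)).2 ≠ 0 := by
  intro h0
  exact h.nz v hv w hvw (Prod.ext (h.bd v hv w hvw hw) h0)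

lemma s_inj {X : Finset V} {x y x' y' : V} (hx : x ∈ X) (hy' : y' ∉ X)
    (h : s(x, y) = s(x', y')) : x = x' ∧ y = y' := by
  rw [Sym2.eq_iff] at h
  rcases h with h | ⟨rfl, rfl⟩
  · exact h
  · exact absurd hx hy'

lemma absorb {X D : Finset V} {c0 : Sym2 V → ZMod 2} {F' : Sym2 V → T} {v1 o1 v3 o3 : V}
    (hDX : D ⊆ X) (hS : SC G D c0) (hF : RF G (X \ D) F') (hv1 : v1 ∈ D) (hv3 : v3 ∈ D)
    (ho1 : o1 ∉ X) (ho3 : o3 ∉ X) (h1 : G.Adj v1 o1) (h3 : G.Adj v3 o3)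
    (hne : s(v1, o1) ≠ s(v3, o3)) (w : K4) :
    ∃ F, RF G X F ∧ (∀ x y, x ∈ X \ D → G.Adj x y → F s(x, y) = F' s(x, y)) ∧
      (∀ x y, x ∈ D → y ∉ X → G.Adj x y → s(x, y) ≠ s(v1, o1) → s(x, y) ≠ s(v3, o3) →
        F s(x, y) = (0, (1, 0))) ∧
      (F s(v1, o1)).2 ≠ w ∧ (∀ x y, G.Adj x y → c0 s(x, y) ≠ 0 → (F s(x, y)).1 ≠ 0) := by
  classical
  have hsupp2 : ∀ u v, G.Adj u v → c0 s(u, v) ≠ 0 → v ∈ D := fun u v h h' =>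
    hS.supp v u h.symm (by rwa [Sym2.eq_swap])
  set tE : Sym2 V → Prop := fun e => ∃ z ∈ e, z ∈ X \ D with htE
  set e1 := s(v1, o1) with he1
  set e3 := s(v3, o3) with he3
  have htx : ∀ x y, x ∈ X \ D → tE s(x, y) := fun x y h => ⟨x, by simp, h⟩
  have htd : ∀ x y, x ∈ D → tE s(x, y) → y ∈ X \ D := by
    rintro x y hx ⟨z, hz, hzX⟩
    rcases Sym2.mem_iff.mp hz with rfl | rfl
    · exact absurd hx (Finset.mem_sdiff.mp hzX).2
    · exact hzX
  have hto : ∀ x y, x ∈ D → y ∉ X → ¬ tE s(x, y) := fun x y hx hy h =>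
    hy (Finset.mem_sdiff.mp (htd x y hx h)).1
  have hc0t : ∀ x y, G.Adj x y → tE s(x, y) → c0 s(x, y) = 0 := by
    rintro x y hxy ⟨z, hz, hzX⟩
    by_contra hc
    rcases Sym2.mem_iff.mp hz with rfl | rfl
    · exact (Finset.mem_sdiff.mp hzX).2 (hS.supp _ _ hxy hc)
    · exact (Finset.mem_sdiff.mp hzX).2 (hsupp2 _ _ hxy hc)
  have hc0o : ∀ x y, G.Adj x y → y ∉ X → c0 s(x, y) = 0 := by
    intro x y hxy hy
    by_contra hc
    exact hy (hDX (hsupp2 _ _ hxy hc))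
  have ht1 : ¬ tE e1 := hto _ _ hv1 ho1
  have ht3 : ¬ tE e3 := hto _ _ hv3 ho3
  set g0 : Sym2 V → K4 := fun e => if tE e then (F' e).2 else
    if e = e1 ∨ e = e3 ∨ c0 e ≠ 0 then 0 else (1, 0) with hg0
  set τ := bs G g0 D Finset.univ with hτ
  have hα : ∀ τ w : K4, ∃ α : K4, α ≠ 0 ∧ α + τ ≠ 0 ∧ α ≠ w := by decide
  obtain ⟨α, hα0, hατ, hαw⟩ := hα τ w
  set b : Sym2 V → K4 := fun e => (g0 e + if e = e1 then α else 0) + if e = e3 then α + τ else 0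
    with hb
  have hbs : ∑ v ∈ D, bs G b {v} Finset.univ = 0 := by
    rw [← bs_eq_sum, hb, bs_add, bs_add, bs_single _ hv1 (by simp) (fun h => ho1 (hDX h)) h1,
      bs_single _ hv3 (by simp) (fun h => ho3 (hDX h)) h3, ← hτ]
    have : ∀ τ α : K4, τ + α + (α + τ) = 0 := by decide
    exact this _ _
  obtain ⟨ζ, hζ0, hζ⟩ := solve k4_two hS ⟨v1, hv1⟩ (fun v => bs G b {v} Finset.univ) hbs
  set F : Sym2 V → T := fun e => (if tE e then (F' e).1 else c0 e, b e + ζ e) with hFdef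
  have hFX : ∀ x y, x ∈ X \ D → G.Adj x y → F s(x, y) = F' s(x, y) := by
    intro x y hx hxy
    have ht := htx x y hx
    have n1 : s(x, y) ≠ e1 := fun h => ht1 (h ▸ ht)
    have n3 : s(x, y) ≠ e3 := fun h => ht3 (h ▸ ht)
    simp only [hFdef, hb, hg0, if_pos ht, if_neg n1, if_neg n3, hζ0 _ (hc0t x y hxy ht), add_zero]
  have hFo : ∀ x y, x ∈ D → y ∉ X → G.Adj x y → s(x, y) ≠ e1 → s(x, y) ≠ e3 →
        F s(x, y) = (0, (1, 0)) := by
    intro x y hx hy hxy n1 n3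
    have hc := hc0o x y hxy hy
    simp [hFdef, hb, hg0, hto x y hx hy, n1, n3, hc, hζ0 _ hc]
  have hF1 : F e1 = (0, α) := by
    have hc := hc0o v1 o1 h1 ho1
    rw [← he1] at hc
    simp [hFdef, hb, hg0, ht1, hne, hc, hζ0 _ hc]
  have hF3 : F e3 = (0, α + τ) := by
    have hc := hc0o v3 o3 h3 ho3
    rw [← he3] at hc
    simp [hFdef, hb, hg0, ht3, hne.symm, hc, hζ0 _ hc]
  have hFc : ∀ x y, G.Adj x y → c0 s(x, y) ≠ 0 → (F s(x, y)).1 ≠ 0 := by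
    intro x y hxy hc
    have ht : ¬ tE s(x, y) := fun h => hc (hc0t x y hxy h)
    simpa [hFdef, ht] using hc
  refine ⟨F, ⟨?_, ?_, ?_⟩, hFX, hFo, by rw [hF1]; exact hαw, hFc⟩
  · intro v hv
    by_cases hvD : v ∈ D
    · refine Prod.ext ?_ ?_
      · have := bs_map (G := G) (AddMonoidHom.fst (ZMod 2) K4) F {v} Finset.univ
        rw [AddMonoidHom.coe_fst] at this
        rw [← this]
        refine Eq.trans ?_ (hS.even v)
        refine bs_congr ?_
        intro x hx y _ hxy
        rw [Finset.mem_singleton] at hx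
        subst hx
        by_cases ht : tE s(x, y)
        · rw [hc0t x y hxy ht]
          simp only [hFdef, if_pos ht]
          rw [Sym2.eq_swap]
          exact hF.bd y (htd x y hvD ht) x hxy.symm (by simp [hvD])
        · simp only [hFdef, if_neg ht]
      · have := bs_map (G := G) (AddMonoidHom.snd (ZMod 2) K4) F {v} Finset.univ
        rw [AddMonoidHom.coe_snd] at this
        rw [← this]
        simp only [hFdef]
        rw [bs_add, hζ v hvD, k4_two]
        rfl
    · have hvX : v ∈ X \ D := by simp [hv, hvD]
      rw [← hF.fl v hvX]
      refine bs_congr ?_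
      intro x hx y _ hxy
      rw [Finset.mem_singleton] at hx
      subst hx
      exact hFX x y hvX hxy
  · intro v hv u hvu
    by_cases hvD : v ∈ D
    · by_cases ht : tE s(v, u)
      · have hu := htd v u hvD ht
        rw [Sym2.eq_swap, hFX u v hu hvu.symm]
        exact hF.nz u hu v hvu.symm
      by_cases hc : c0 s(v, u) = 0
      · by_cases n1 : s(v, u) = e1
        · rw [n1, hF1]; simp [hα0]
        by_cases n3 : s(v, u) = e3
        · rw [n3, hF3]; simp only [ne_eq, Prod.mk_eq_zero, not_and]; exact fun _ => hατ
        · simp [hFdef, hb, hg0, n1, n3, ht, hc, hζ0 _ hc]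
      · intro h0
        exact hFc v u hvu hc (by rw [h0]; rfl)
    · have hvX : v ∈ X \ D := by simp [hv, hvD]
      rw [hFX v u hvX hvu]
      exact hF.nz v hvX u hvu
  · intro v hv u hvu huX
    by_cases hvD : v ∈ D
    · simp only [hFdef, if_neg (hto v u hvD huX)]
      exact hc0o v u hvu huX
    · have hvX : v ∈ X \ D := by simp [hv, hvD]
      rw [hFX v u hvX hvu]
      exact hF.bd v hvX u hvu (by simp [huX])

lemma glueRF {K1 K2 : Finset V} {F1 F2 : Sym2 V → T} (hd : Disjoint K1 K2) (h1 : RF G K1 F1)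
    (h2 : RF G K2 F2) (h : ∀ x ∈ K1, ∀ y ∈ K2, G.Adj x y → F1 s(x, y) = F2 s(x, y)) :
    ∃ F, RF G (K1 ∪ K2) F ∧ (∀ x ∈ K1, ∀ y, G.Adj x y → F s(x, y) = F1 s(x, y)) ∧
      (∀ x ∈ K2, ∀ y, G.Adj x y → F s(x, y) = F2 s(x, y)) := by
  classical
  set F : Sym2 V → T := fun e => if ∃ z ∈ e, z ∈ K1 then F1 e else F2 e with hF
  have a1 : ∀ x ∈ K1, ∀ y, G.Adj x y → F s(x, y) = F1 s(x, y) := by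
    intro x hx y _
    simp only [hF]
    rw [if_pos ⟨x, by simp, hx⟩]
  have a2 : ∀ x ∈ K2, ∀ y, G.Adj x y → F s(x, y) = F2 s(x, y) := by
    intro x hx y hxy
    by_cases hy : y ∈ K1
    · rw [Sym2.eq_swap, a1 y hy x hxy.symm, h y hy x hx hxy.symm]
    · simp only [hF]
      rw [if_neg]
      rintro ⟨z, hz, hz1⟩
      rcases Sym2.mem_iff.mp hz with rfl | rfl
      · exact Finset.disjoint_left.mp hd hz1 hx
      · exact hy hz1
  refine ⟨F, ⟨?_, ?_, ?_⟩, a1, a2⟩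
  · intro v hv
    rcases Finset.mem_union.mp hv with hv | hv
    · rw [← h1.fl v hv]
      refine bs_congr ?_
      intro x hx y _ hxy
      rw [Finset.mem_singleton] at hx
      subst hx
      exact a1 x hv y hxy
    · rw [← h2.fl v hv]
      refine bs_congr ?_
      intro x hx y _ hxy
      rw [Finset.mem_singleton] at hx
      subst hx
      exact a2 x hv y hxy
  · intro v hv w hvw
    rcases Finset.mem_union.mp hv with hv | hv
    · rw [a1 v hv w hvw]; exact h1.nz v hv w hvw
    · rw [a2 v hv w hvw]; exact h2.nz v hv w hvw
  · intro v hv w hvw hw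
    rw [Finset.mem_union, not_or] at hw
    rcases Finset.mem_union.mp hv with hv | hv
    · rw [a1 v hv w hvw]; exact h1.bd v hv w hvw hw.1
    · rw [a2 v hv w hvw]; exact h2.bd v hv w hvw hw.2

lemma mapRF {X : Finset V} {F : Sym2 V → T} (h : RF G X F) (g : K4 →+ K4)
    (hg : ∀ x, g x = 0 → x = 0) : RF G X (fun e => ((F e).1, g (F e).2)) := by
  refine ⟨?_, ?_, ?_⟩
  · intro v hv
    have := bs_map (G := G) ((AddMonoidHom.fst (ZMod 2) K4).prod (g.comp
      (AddMonoidHom.snd (ZMod 2) K4))) F {v} Finset.univ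
    rw [h.fl v hv, map_zero] at this
    exact this
  · intro v hv w hvw h0
    simp only [Prod.mk_eq_zero] at h0
    exact h.nz v hv w hvw (Prod.ext h0.1 (hg _ h0.2))
  · intro v hv w hvw hw
    exact h.bd v hv w hvw hw

lemma glue1 {K1 K2 : Finset V} {F1 F2 : Sym2 V → T} (hd : Disjoint K1 K2) (h1 : RF G K1 F1)
    (h2 : RF G K2 F2) (hec : ec G K1 K2 ≤ 1) (y y1 : K4) (hy : y ≠ 0)
    (hy1 : ∀ x ∈ K1, ∀ z ∈ K2, G.Adj x z → y1 ≠ (F1 s(x, z)).2) :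
    ∃ F, ∃ g : K4 →+ K4, RF G (K1 ∪ K2) F ∧ (∀ x, g x = 0 → x = 0) ∧ g y ≠ y1 ∧
      (∀ x ∈ K1, ∀ y, G.Adj x y → F s(x, y) = F1 s(x, y)) ∧
      (∀ x ∈ K2, ∀ y, G.Adj x y → F s(x, y) = ((F2 s(x, y)).1, g (F2 s(x, y)).2)) := by
  have hg : ∃ g : K4 →+ K4, (∀ x, g x = 0 → x = 0) ∧ g y ≠ y1 ∧
      ∀ x ∈ K1, ∀ z ∈ K2, G.Adj x z → (F1 s(x, z)).2 = g (F2 s(x, z)).2 := by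
    by_cases hk : ∃ x ∈ K1, ∃ z ∈ K2, G.Adj x z
    · obtain ⟨x, hx, z, hz, hxz⟩ := hk
      have n1 := h1.bd2 hx hxz (Finset.disjoint_right.mp hd hz)
      have n2 := h2.bd2 hz hxz.symm (Finset.disjoint_left.mp hd hx)
      rw [Sym2.eq_swap] at n2
      obtain ⟨g, hg1, hg2, hg3⟩ := exists_g _ _ y y1 n1 n2 hy (hy1 x hx z hz hxz)
      refine ⟨g, hg1, hg3, ?_⟩
      intro x' hx' z' hz' hxz'
      obtain ⟨rfl, rfl⟩ := ec_le_one hec hx hz hxz hx' hz' hxz'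
      exact hg2.symm
    · have : ∀ y1 : K4, ∃ m : K4, m ≠ 0 ∧ y1 ≠ m := by decide
      obtain ⟨m, hm, hm1⟩ := this y1
      obtain ⟨g, hg1, hg2, hg3⟩ := exists_g m y y y1 hm hy hy hm1
      refine ⟨g, hg1, hg3, ?_⟩
      intro x' hx' z' hz' hxz'
      exact absurd ⟨x', hx', z', hz', hxz'⟩ hk
  obtain ⟨g, hg1, hg2, hg3⟩ := hg
  obtain ⟨F, hF, a1, a2⟩ := glueRF hd h1 (mapRF h2 g hg1) (by
    intro x hx z hz hxz
    refine Prod.ext ?_ (hg3 x hx z hz hxz)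
    have n1 := h1.bd x hx z hxz (Finset.disjoint_right.mp hd hz)
    have n2 := h2.bd z hz x hxz.symm (Finset.disjoint_left.mp hd hx)
    rw [Sym2.eq_swap] at n2
    rw [n1]; exact n2.symm)
  exact ⟨F, g, hF, hg1, hg2, a1, a2⟩

lemma glue0 {K1 K2 : Finset V} {F1 F2 : Sym2 V → T} (hd : Disjoint K1 K2) (h1 : RF G K1 F1)
    (h2 : RF G K2 F2) (hec : ec G K1 K2 ≤ 1) :
    ∃ F, RF G (K1 ∪ K2) F ∧
      (∀ x ∈ K1, ∀ y, G.Adj x y → F s(x, y) = F1 s(x, y)) := by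
  obtain ⟨F, g, hF, -, -, h, -⟩ := glue1 hd h1 h2 hec (1, 0) 0 (by decide) (by
    intro x hx z hz hxz
    exact (h1.bd2 hx hxz (Finset.disjoint_right.mp hd hz)).symm)
  exact ⟨F, hF, h⟩

/-- plain rooted flow -/
lemma L1 (n : ℕ) : ∀ X : Finset V, X.card ≤ n →
    (∀ K ⊆ X, K.Nonempty → 2 ≤ dd G K) → ∃ F, RF G X F := by
  induction n with
  | zero =>
    intro X hX _
    have : X = ∅ := by simpa using hX
    subst this
    exact ⟨fun _ => 0, by simp, by simp, by simp⟩
  | succ n ih =>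
    intro X hXn hX
    by_cases hX0 : X = ∅
    · subst hX0
      exact ⟨fun _ => 0, by simp, by simp, by simp⟩
    have hXne := Finset.nonempty_iff_ne_empty.mpr hX0
    by_cases hsp : ∃ K ⊆ X, K.Nonempty ∧ K ≠ X ∧ ec G K (X \ K) ≤ 1
    · obtain ⟨K, hKX, hKne, hK, hec⟩ := hsp
      have hlt : K.card < X.card := Finset.card_lt_card (Finset.ssubset_iff_subset_ne.mpr ⟨hKX, hK⟩)
      have hs := Finset.card_sdiff_add_card_eq_card hKX
      have hpos := hKne.card_pos
      obtain ⟨F1, hF1⟩ := ih K (by omega) (fun K' h h' => hX K' (h.trans hKX) h')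
      obtain ⟨F2, hF2⟩ := ih (X \ K) (by omega)
        (fun K' h h' => hX K' (h.trans Finset.sdiff_subset) h')
      obtain ⟨F, hF, -⟩ := glue0 Finset.disjoint_sdiff hF1 hF2 hec
      rw [Finset.union_sdiff_of_subset hKX] at hF
      exact ⟨F, hF⟩
    · push Not at hsp
      have hdX := hX X subset_rfl hXne
      obtain ⟨v1, hv1, o1, ho1, h1, -⟩ := ec_gt (G := G) X Xᶜ ∅ (by
        rw [Finset.card_empty]; unfold dd at hdX; omega)
      obtain ⟨v3, hv3, o3, ho3, h3, hne⟩ := ec_gt (G := G) X Xᶜ {(v1, o1)} (by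
        rw [Finset.card_singleton]; unfold dd at hdX; omega)
      rw [Finset.mem_compl] at ho1 ho3
      obtain ⟨D, c0, hDX, hD1, hD3, hS⟩ := menger (G := G) (X := X) (fun K h1 h2 h3 => hsp K h1 h2 h3)
        hv1 hv3
      have hs := Finset.card_sdiff_add_card_eq_card hDX
      have hpos := Finset.card_pos.mpr ⟨_, hD1⟩
      obtain ⟨F', hF'⟩ := ih (X \ D) (by omega)
        (fun K' h h' => hX K' (h.trans Finset.sdiff_subset) h')
      obtain ⟨F, hF, -⟩ := absorb hDX hS hF' hD1 hD3 ho1 ho3 h1 h3 (by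
        intro h
        obtain ⟨rfl, rfl⟩ := s_inj hv1 ho3 h
        simp at hne) 0
      exact ⟨F, hF⟩

lemma L1' (X : Finset V) (h : ∀ K ⊆ X, K.Nonempty → 2 ≤ dd G K) : ∃ F, RF G X F :=
  L1 _ X le_rfl h

lemma L2 (n : ℕ) : ∀ X : Finset V, X.card ≤ n →
    (∀ K ⊆ X, K.Nonempty → 3 ≤ dd G K) → ∀ v1 o1 v2 o2 : V, v1 ∈ X → v2 ∈ X → o1 ∉ X → o2 ∉ X →
    G.Adj v1 o1 → G.Adj v2 o2 → s(v1, o1) ≠ s(v2, o2) →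
    ∃ F, RF G X F ∧ F s(v1, o1) ≠ F s(v2, o2) := by
  induction n with
  | zero =>
    intro X hX _ v1 _ _ _ hv1
    have : X = ∅ := by simpa using hX
    subst this
    simp at hv1
  | succ n ih =>
    intro X hXn hX v1 o1 v2 o2 hv1 hv2 ho1 ho2 h1 h2 hne
    have hX2 : ∀ K ⊆ X, K.Nonempty → 2 ≤ dd G K := fun K h h' => by
      have := hX K h h'; omega
    by_cases hsp : ∃ K ⊆ X, v1 ∈ K ∧ K ≠ X ∧ ec G K (X \ K) ≤ 1
    · obtain ⟨K, hKX, hK1, hK, hec⟩ := hsp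
      have hlt : K.card < X.card := Finset.card_lt_card (Finset.ssubset_iff_subset_ne.mpr ⟨hKX, hK⟩)
      have hIH := ih K (by omega) (fun K' h h' => hX K' (h.trans hKX) h')
      obtain ⟨F2, hF2⟩ := L1' (X \ K) (fun K' h h' => hX2 K' (h.trans Finset.sdiff_subset) h')
      have ho1' : o1 ∉ K := fun h => ho1 (hKX h)
      have ho2' : o2 ∉ K := fun h => ho2 (hKX h)
      by_cases hv2K : v2 ∈ K
      · obtain ⟨F1, hF1, hFF⟩ := hIH v1 o1 v2 o2 hK1 hv2K ho1' ho2' h1 h2 hne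
        obtain ⟨F, hF, hag⟩ := glue0 Finset.disjoint_sdiff hF1 hF2 hec
        rw [Finset.union_sdiff_of_subset hKX] at hF
        refine ⟨F, hF, ?_⟩
        rwa [hag v1 hK1 o1 h1, hag v2 hv2K o2 h2]
      · have hv2' : v2 ∈ X \ K := by simp [hv2, hv2K]
        have : ∃ F1, RF G K F1 ∧ ∀ x ∈ K, ∀ z ∈ X \ K, G.Adj x z →
            F1 s(v1, o1) ≠ F1 s(x, z) := by
          by_cases hk : ∃ x ∈ K, ∃ z ∈ X \ K, G.Adj x z
          · obtain ⟨x, hx, z, hz, hxz⟩ := hk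
            obtain ⟨F1, hF1, hFF⟩ := hIH v1 o1 x z hK1 hx ho1' (Finset.mem_sdiff.mp hz).2 h1 hxz (by
              intro h
              obtain ⟨rfl, rfl⟩ := s_inj hK1 (Finset.mem_sdiff.mp hz).2 h
              exact ho1 (Finset.mem_sdiff.mp hz).1)
            refine ⟨F1, hF1, ?_⟩
            intro x' hx' z' hz' hxz'
            obtain ⟨rfl, rfl⟩ := ec_le_one hec hx hz hxz hx' hz' hxz'
            exact hFF
          · obtain ⟨F1, hF1⟩ := L1' K (fun K' h h' => hX2 K' (h.trans hKX) h')
            exact ⟨F1, hF1, fun x' hx' z' hz' hxz' => absurd ⟨x', hx', z', hz', hxz'⟩ hk⟩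
        obtain ⟨F1, hF1, hFF⟩ := this
        obtain ⟨F, g, hF, -, hg, a1, a2⟩ := glue1 Finset.disjoint_sdiff hF1 hF2 hec
          (F2 s(v2, o2)).2 (F1 s(v1, o1)).2
          (hF2.bd2 hv2' h2 (fun h => ho2 (Finset.mem_sdiff.mp h).1)) (by
            intro x hx z hz hxz h
            refine hFF x hx z hz hxz (Prod.ext ?_ h)
            rw [hF1.bd v1 hK1 o1 h1 ho1', hF1.bd x hx z hxz (Finset.mem_sdiff.mp hz).2])
        rw [Finset.union_sdiff_of_subset hKX] at hF
        refine ⟨F, hF, ?_⟩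
        rw [a1 v1 hK1 o1 h1, a2 v2 hv2' o2 h2]
        intro h
        rw [h] at hg
        exact hg rfl
    · push Not at hsp
      have hsp' : ∀ K ⊆ X, K.Nonempty → K ≠ X → 2 ≤ ec G K (X \ K) := by
        intro K hK hne hKX
        by_cases hvK : v1 ∈ K
        · exact hsp K hK hvK hKX
        · have := hsp (X \ K) Finset.sdiff_subset (by simp [hv1, hvK]) (by
            intro h
            obtain ⟨z, hz⟩ := hne
            have : z ∈ X \ K := by rw [h]; exact hK hz
            exact (Finset.mem_sdiff.mp this).2 hz)
          rw [ec_comm, Finset.sdiff_sdiff_eq_self hK] at this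
          exact this
      have hdX := hX X subset_rfl ⟨v1, hv1⟩
      obtain ⟨v3, hv3, o3, ho3, h3, hne3⟩ := ec_gt (G := G) X Xᶜ {(v1, o1), (v2, o2)} (by
        have := Finset.card_le_two (a := (v1, o1)) (b := (v2, o2))
        unfold dd at hdX; omega)
      rw [Finset.mem_compl] at ho3
      simp only [Finset.mem_insert, Finset.mem_singleton, Prod.mk.injEq, not_or] at hne3
      obtain ⟨D, c0, hDX, hD1, hD3, hS⟩ := menger hsp' hv1 hv3
      obtain ⟨F', hF'⟩ := L1' (X \ D) (fun K' h h' => hX2 K' (h.trans Finset.sdiff_subset) h')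
      obtain ⟨F, hF, hFX, hFo, hFw, -⟩ := absorb hDX hS hF' hD1 hD3 ho1 ho3 h1 h3 (by
        intro h
        obtain ⟨rfl, rfl⟩ := s_inj hv1 ho3 h
        simp at hne3) (if v2 ∈ D then (1, 0) else (F' s(v2, o2)).2)
      refine ⟨F, hF, ?_⟩
      by_cases hv2D : v2 ∈ D
      · rw [if_pos hv2D] at hFw
        rw [hFo v2 o2 hv2D ho2 h2 hne.symm (by
          intro h
          obtain ⟨rfl, rfl⟩ := s_inj hv2 ho3 h
          simp at hne3)]
        intro h
        rw [h] at hFw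
        exact hFw rfl
      · rw [if_neg hv2D] at hFw
        rw [hFX v2 o2 (by simp [hv2, hv2D]) h2]
        intro h
        rw [h] at hFw
        exact hFw rfl

end rf
end NC

set_option linter.unusedSectionVars false
namespace NC

/-- pairs `{a,b}` and `{d,e}` are equal or disjoint -/
abbrev sim (a b d e : T) : Prop :=
  (a = d ∧ b = e) ∨ (a = e ∧ b = d) ∨ (a ≠ d ∧ a ≠ e ∧ b ≠ d ∧ b ≠ e)

lemma nrm {x a b d e : T} (h1 : x ≠ a) (h2 : x ≠ b) (h3 : a ≠ b) (h4 : x ≠ d) (h5 : x ≠ e)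
    (h6 : d ≠ e) (h : sim a b d e) :
    (({x, a, b} ∪ {x, d, e} : Finset T).card = 3 ∨ ({x, a, b} ∪ {x, d, e} : Finset T).card = 5) := by
  rcases h with ⟨rfl, rfl⟩ | ⟨rfl, rfl⟩ | ⟨h7, h8, h9, h10⟩
  · left; rw [Finset.union_idempotent, Finset.card_eq_three]; exact ⟨x, a, b, h1, h2, h3, rfl⟩
  · left
    rw [show ({x, b, a} : Finset T) = {x, a, b} by ext; simp; tauto,
      Finset.union_idempotent, Finset.card_eq_three]; exact ⟨x, a, b, h1, h2, h3, rfl⟩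
  · right
    rw [show ({x, a, b} ∪ {x, d, e} : Finset T) = {x, a, b, d, e} by ext; simp; tauto]
    rw [Finset.card_insert_of_notMem, Finset.card_insert_of_notMem, Finset.card_insert_of_notMem,
      Finset.card_pair h6] <;> simp <;> tauto

lemma perm_ext {n : ℕ} (f g : Fin n → T) (hf : Function.Injective f) (hg : Function.Injective g) :
    ∃ σ : Equiv.Perm T, ∀ i, σ (f i) = g i := by
  have := Equiv.Perm.isMultiplyPretransitive T n
  obtain ⟨σ, hσ⟩ := this.exists_smul_eq ⟨f, hf⟩ ⟨g, hg⟩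
  refine ⟨σ, fun i => ?_⟩
  have := DFunLike.congr_fun hσ i
  simpa using this

instance : DecidableEq T := inferInstance
instance : Fintype T := inferInstance
instance : DecidableEq K4 := inferInstance

set_option synthInstance.maxSize 10000
set_option synthInstance.maxHeartbeats 400000
lemma patA : ∀ f g p : T, f ≠ 0 → g ≠ 0 → f ≠ g → p ≠ 0 → p ≠ f → ∀ q : T, q ≠ 0 → q ≠ g →
    ∃ i : T, (i ≠ 0 ∧ i ≠ f ∧ i ≠ g) ∧ ∃ j : T, (j ≠ 0 ∧ j ≠ f ∧ j ≠ g ∧ i ≠ j) ∧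
      sim i j p (p + f) ∧ sim i j q (q + g) := by
  decide +kernel

lemma patB : ∀ f g p : T, f ≠ 0 → g ≠ 0 → f ≠ g → p ≠ 0 → p ≠ f → ∀ q : T, q ≠ 0 → q ≠ g →
    ∃ i : T, (i ≠ 0 ∧ i ≠ f ∧ i ≠ g) ∧ ∃ j : T, ((j ≠ 0 ∧ j ≠ f ∧ j ≠ g ∧ i ≠ j) ∧
      sim i j p (p + f)) ∧
    ∃ k : T, (k ≠ 0 ∧ k ≠ f ∧ k ≠ g ∧ k ≠ i ∧ k ≠ j) ∧
    ∃ l : T, (l ≠ 0 ∧ l ≠ f ∧ l ≠ g ∧ l ≠ i ∧ l ≠ j ∧ k ≠ l) ∧ sim k l q (q + g) := by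
  decide +kernel

section col
variable {V : Type*} [Fintype V] [DecidableEq V] {G : SimpleGraph V} [DecidableRel G.Adj]

/-- colors at `v` -/
def Sc (G : SimpleGraph V) [DecidableRel G.Adj] (c : Sym2 V → T) (v : V) : Finset T :=
  (Finset.univ.filter (G.Adj v)).image (fun w => c s(v, w))

structure Col (G : SimpleGraph V) [DecidableRel G.Adj] (X : Finset V) (c : Sym2 V → T) : Prop where
  nz : ∀ v ∈ X, 0 ∉ Sc G c v
  c3 : ∀ v ∈ X, (Sc G c v).card = 3
  nm : ∀ v ∈ X, ∀ w ∈ X, G.Adj v w →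
    ((Sc G c v ∪ Sc G c w).card = 3 ∨ (Sc G c v ∪ Sc G c w).card = 5)

structure Nb (G : SimpleGraph V) (v a b d : V) : Prop where
  n1 : a ≠ b
  n2 : a ≠ d
  n3 : b ≠ d
  adj : ∀ w, G.Adj v w ↔ w = a ∨ w = b ∨ w = d

lemma Nb.a1 {v a b d : V} (h : Nb G v a b d) : G.Adj v a := (h.adj a).mpr (by simp)
lemma Nb.a2 {v a b d : V} (h : Nb G v a b d) : G.Adj v b := (h.adj b).mpr (by simp)
lemma Nb.a3 {v a b d : V} (h : Nb G v a b d) : G.Adj v d := (h.adj d).mpr (by simp)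

lemma Nb.rot {v a b d : V} (h : Nb G v a b d) : Nb G v b d a :=
  ⟨h.n3, h.n1.symm, h.n2.symm, fun w => by rw [h.adj]; tauto⟩
lemma Nb.sw {v a b d : V} (h : Nb G v a b d) : Nb G v a d b :=
  ⟨h.n2, h.n1, h.n3.symm, fun w => by rw [h.adj]; tauto⟩

/-- cubic graphs, working form -/
def Cub (G : SimpleGraph V) : Prop := ∀ v, ∃ a b d, Nb G v a b d

lemma Cub.nb1 (hc : Cub G) {v a : V} (h : G.Adj v a) : ∃ b d, Nb G v a b d := by
  obtain ⟨x, y, z, hn⟩ := hc v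
  rcases (hn.adj a).mp h with rfl | rfl | rfl
  · exact ⟨_, _, hn⟩
  · exact ⟨_, _, hn.rot⟩
  · exact ⟨_, _, hn.rot.rot⟩

lemma Cub.nb2 (hc : Cub G) {v a b : V} (h : G.Adj v a) (h' : G.Adj v b) (hab : a ≠ b) :
    ∃ d, Nb G v a b d := by
  obtain ⟨x, y, hn⟩ := hc.nb1 h
  rcases (hn.adj b).mp h' with rfl | rfl | rfl
  · exact absurd rfl hab
  · exact ⟨_, hn⟩
  · exact ⟨_, hn.sw⟩

lemma Nb.sc {v a b d : V} (h : Nb G v a b d) (c : Sym2 V → T) :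
    Sc G c v = {c s(v, a), c s(v, b), c s(v, d)} := by
  ext x
  simp only [Sc, Finset.mem_image, Finset.mem_filter, Finset.mem_univ, true_and, h.adj,
    Finset.mem_insert, Finset.mem_singleton]
  constructor
  · rintro ⟨w, rfl | rfl | rfl, rfl⟩ <;> simp
  · rintro (rfl | rfl | rfl)
    · exact ⟨a, by simp, rfl⟩
    · exact ⟨b, by simp, rfl⟩
    · exact ⟨d, by simp, rfl⟩

lemma Nb.bs {M : Type*} [AddCommMonoid M] {v a b d : V} (h : Nb G v a b d) (c : Sym2 V → M) :
    bs G c {v} Finset.univ = c s(v, a) + c s(v, b) + c s(v, d) := by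
  unfold NC.bs
  rw [Finset.sum_singleton, ← Finset.sum_filter]
  have : Finset.univ.filter (G.Adj v) = {a, b, d} := by
    ext w; simp [h.adj]
  rw [this, Finset.sum_insert, Finset.sum_pair h.n3, add_assoc]
  simp [h.n1, h.n2]

lemma Nb.ecl {v a b d : V} (h : Nb G v a b d) (B : Finset V) :
    ec G {v} B = (if a ∈ B then 1 else 0) + (if b ∈ B then 1 else 0) + (if d ∈ B then 1 else 0) := by
  have : ec G {v} B = NC.bs G (fun e => if ∃ w ∈ B, e = s(v, w) then (1 : ℕ) else 0) {v} Finset.univ := by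
    unfold ec NC.bs
    rw [Finset.sum_singleton, Finset.sum_singleton]
    rw [← Finset.sum_subset (Finset.subset_univ B)]
    · refine Finset.sum_congr rfl fun w hw => ?_
      beta_reduce
      split_ifs with h1 h2 h2
      · rfl
      · exact absurd ⟨w, hw, rfl⟩ h2
      · rfl
    · intro w _ hw
      beta_reduce
      split_ifs with h1 h2
      · obtain ⟨w', hw', h3⟩ := h2
        rcases Sym2.eq_iff.mp h3 with h4 | h4
        · exact absurd (h4.2 ▸ hw') hw
        · exact absurd h4.2 h1.ne.symm
      · rfl
      · rfl
  rw [this, h.bs]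
  have key : ∀ a, G.Adj v a → ((∃ w ∈ B, s(v, a) = s(v, w)) ↔ a ∈ B) := by
    intro a ha
    constructor
    · rintro ⟨w', hw', h3⟩
      rcases Sym2.eq_iff.mp h3 with h4 | h4
      · rw [h4.2]; exact hw'
      · exact absurd h4.2 ha.ne.symm
    · exact fun h => ⟨a, h, rfl⟩
  simp only [key a h.a1, key b h.a2, key d h.a3]

lemma Sc_congr {c c' : Sym2 V → T} {v : V} (h : ∀ w, G.Adj v w → c s(v, w) = c' s(v, w)) :
    Sc G c v = Sc G c' v := by
  unfold Sc
  refine Finset.image_congr ?_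
  intro w hw
  simp at hw
  exact h w hw

lemma t_line : ∀ a b d : T, a ≠ 0 → b ≠ 0 → d ≠ 0 → a + b + d = 0 → (a ≠ b ∧ a ≠ d ∧ b ≠ d) := by
  decide +kernel

lemma t_sum (a b d : T) (h : a + b + d = 0) : d = b + a := by
  have h1 : a + b = -d := eq_neg_of_add_eq_zero_left h
  have h2 : -d = d := neg_eq_of_add_eq_zero_left (t_two d)
  rw [h2] at h1
  rw [← h1, add_comm]

lemma t_sum' {a b d : T} (h : a + b + d = 0) : a = b + d := by
  have : b + d + a = 0 := by rw [← h]; abel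
  have := t_sum _ _ _ this
  rw [this, add_comm]

lemma t_sim {x a b d e : T} (h1 : x + a + b = 0) (h2 : x + d + e = 0) : sim a b d e := by
  have hb : b = a + x := t_sum _ _ _ h1
  have he : e = d + x := t_sum _ _ _ h2
  have hx := t_two x
  subst hb he
  by_cases h : a = d
  · left; exact ⟨h, by rw [h]⟩
  by_cases h' : a = d + x
  · right; left; exact ⟨h', by rw [h', add_assoc, hx, add_zero]⟩
  · right; right
    refine ⟨h, h', ?_, fun h3 => h (add_right_cancel h3)⟩
    intro h3
    apply h'
    rw [← h3, add_assoc, hx, add_zero]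

lemma fl_col (hc : Cub G) {X : Finset V} {F : Sym2 V → T}
    (hf : ∀ v ∈ X, bs G F {v} Finset.univ = 0) (hn : ∀ v ∈ X, ∀ w, G.Adj v w → F s(v, w) ≠ 0) :
    Col G X F := by
  refine ⟨?_, ?_, ?_⟩
  · intro v hv h
    simp only [Sc, Finset.mem_image, Finset.mem_filter, Finset.mem_univ, true_and] at h
    obtain ⟨w, hw, h⟩ := h
    exact hn v hv w hw h
  · intro v hv
    obtain ⟨a, b, d, hN⟩ := hc v
    have h0 := hf v hv
    rw [hN.bs] at h0
    rw [hN.sc, Finset.card_eq_three]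
    obtain ⟨h1, h2, h3⟩ := t_line _ _ _ (hn v hv _ hN.a1) (hn v hv _ hN.a2) (hn v hv _ hN.a3) h0
    exact ⟨_, _, _, h1, h2, h3, rfl⟩
  · intro v hv w hw hvw
    obtain ⟨a, b, hN⟩ := hc.nb1 hvw
    obtain ⟨d, e, hM⟩ := hc.nb1 hvw.symm
    have h0 := hf v hv
    rw [hN.bs] at h0
    have h0' := hf w hw
    rw [hM.bs] at h0'
    obtain ⟨h1, h2, h3⟩ := t_line _ _ _ (hn v hv _ hN.a1) (hn v hv _ hN.a2) (hn v hv _ hN.a3) h0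
    obtain ⟨h1', h2', h3'⟩ := t_line _ _ _ (hn w hw _ hM.a1) (hn w hw _ hM.a2) (hn w hw _ hM.a3) h0'
    rw [hN.sc, hM.sc]
    rw [Sym2.eq_swap (a := w) (b := v)] at h1' h2' h0' ⊢
    exact nrm h1 h2 h3 h1' h2' h3' (t_sim h0 h0')

lemma RF.col (hc : Cub G) {X : Finset V} {F : Sym2 V → T} (h : RF G X F) : Col G X F :=
  fl_col hc h.fl h.nz

lemma Sc_perm (σ : Equiv.Perm T) (c : Sym2 V → T) (v : V) :
    Sc G (fun e => σ (c e)) v = (Sc G c v).image σ := by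
  unfold Sc; rw [Finset.image_image]; rfl

lemma Col.perm {X : Finset V} {c : Sym2 V → T} (h : Col G X c) (σ : Equiv.Perm T) (h0 : σ 0 = 0) :
    Col G X (fun e => σ (c e)) := by
  refine ⟨?_, ?_, ?_⟩
  · intro v hv
    rw [Sc_perm, Finset.mem_image]
    rintro ⟨x, hx, hx0⟩
    have : x = 0 := σ.injective (hx0.trans h0.symm)
    exact h.nz v hv (this ▸ hx)
  · intro v hv
    rw [Sc_perm, Finset.card_image_of_injective _ σ.injective]
    exact h.c3 v hv
  · intro v hv w hw hvw
    rw [Sc_perm, Sc_perm, ← Finset.image_union, Finset.card_image_of_injective _ σ.injective]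
    exact h.nm v hv w hw hvw

lemma Col.glue {A B : Finset V} {c1 c2 : Sym2 V → T} (hd : Disjoint A B) (h1 : Col G A c1)
    (h2 : Col G B c2) (hag : ∀ x ∈ A, ∀ y ∈ B, G.Adj x y → c1 s(x, y) = c2 s(x, y))
    (hn : ∀ x ∈ A, ∀ y ∈ B, G.Adj x y →
      ((Sc G c1 x ∪ Sc G c2 y).card = 3 ∨ (Sc G c1 x ∪ Sc G c2 y).card = 5)) :
    ∃ c, Col G (A ∪ B) c := by
  classical
  set c : Sym2 V → T := fun e => if ∃ z ∈ e, z ∈ A then c1 e else c2 e with hcdef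
  have a1 : ∀ x ∈ A, Sc G c x = Sc G c1 x := by
    intro x hx
    refine Sc_congr fun y _ => ?_
    simp only [hcdef]
    rw [if_pos ⟨x, by simp, hx⟩]
  have a2 : ∀ x ∈ B, Sc G c x = Sc G c2 x := by
    intro x hx
    refine Sc_congr fun y hxy => ?_
    simp only [hcdef]
    split_ifs with h
    · obtain ⟨z, hz, hzA⟩ := h
      rcases Sym2.mem_iff.mp hz with rfl | rfl
      · exact absurd hx (Finset.disjoint_left.mp hd hzA)
      · rw [Sym2.eq_swap]; exact hag _ hzA _ hx hxy.symm
    · rfl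
  refine ⟨c, ?_, ?_, ?_⟩
  · intro v hv
    rcases Finset.mem_union.mp hv with hv | hv
    · rw [a1 v hv]; exact h1.nz v hv
    · rw [a2 v hv]; exact h2.nz v hv
  · intro v hv
    rcases Finset.mem_union.mp hv with hv | hv
    · rw [a1 v hv]; exact h1.c3 v hv
    · rw [a2 v hv]; exact h2.c3 v hv
  · intro v hv w hw hvw
    rcases Finset.mem_union.mp hv with hv | hv <;> rcases Finset.mem_union.mp hw with hw | hw
    · rw [a1 v hv, a1 w hw]; exact h1.nm v hv w hw hvw
    · rw [a1 v hv, a2 w hw]; exact hn v hv w hw hvw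
    · rw [a2 v hv, a1 w hw, Finset.union_comm]; exact hn w hw v hv hvw.symm
    · rw [a2 v hv, a2 w hw]; exact h2.nm v hv w hw hvw

/-- distinctness at a vertex -/
lemma Col.ne {X : Finset V} {c : Sym2 V → T} (h : Col G X c) {v a b d : V} (hv : v ∈ X)
    (hN : Nb G v a b d) : c s(v, a) ≠ c s(v, b) ∧ c s(v, a) ≠ c s(v, d) ∧ c s(v, b) ≠ c s(v, d) ∧
      c s(v, a) ≠ 0 ∧ c s(v, b) ≠ 0 ∧ c s(v, d) ≠ 0 := by
  have h3 := h.c3 v hv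
  have h0 := h.nz v hv
  rw [hN.sc] at h3 h0
  simp only [Finset.mem_insert, Finset.mem_singleton, not_or] at h0
  refine ⟨?_, ?_, ?_, Ne.symm h0.1, Ne.symm h0.2.1, Ne.symm h0.2.2⟩
  · intro h; rw [h] at h3; simp at h3
    have := Finset.card_le_two (a := c s(v, b)) (b := c s(v, d)); omega
  · intro h; rw [h] at h3; simp at h3
    have := Finset.card_le_two (a := c s(v, b)) (b := c s(v, d)); omega
  · intro h; rw [h] at h3; simp at h3
    have := Finset.card_le_two (a := c s(v, a)) (b := c s(v, d)); omega

/-- bridge case -/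
lemma Col.bridge (hc : Cub G) {A B : Finset V} {c1 c2 : Sym2 V → T} (hd : Disjoint A B)
    (h1 : Col G A c1) (h2 : Col G B c2) (hec : ec G A B ≤ 1) : ∃ c, Col G (A ∪ B) c := by
  by_cases hk : ∃ x ∈ A, ∃ y ∈ B, G.Adj x y
  · obtain ⟨x, hx, y, hy, hxy⟩ := hk
    obtain ⟨a, b, hN⟩ := hc.nb1 hxy
    obtain ⟨d, e, hM⟩ := hc.nb1 hxy.symm
    obtain ⟨p1, p2, p3, p4, p5, p6⟩ := h1.ne hx hN
    obtain ⟨q1, q2, q3, q4, q5, q6⟩ := h2.ne hy hM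
    obtain ⟨σ, hσ⟩ := perm_ext ![0, c2 s(y, x), c2 s(y, d), c2 s(y, e)]
      ![0, c1 s(x, y), c1 s(x, a), c1 s(x, b)] (by
        intro i j
        fin_cases i <;> fin_cases j <;> simp [q1, q2, q3, q4, q5, q6, Ne.symm q1, Ne.symm q2,
          Ne.symm q3, Ne.symm q4, Ne.symm q5, Ne.symm q6]) (by
        intro i j
        fin_cases i <;> fin_cases j <;> simp [p1, p2, p3, p4, p5, p6, Ne.symm p1, Ne.symm p2,
          Ne.symm p3, Ne.symm p4, Ne.symm p5, Ne.symm p6])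
    have s0 := hσ 0
    have s1 := hσ 1
    have s2 := hσ 2
    have s3 := hσ 3
    simp at s0 s1 s2 s3
    refine Col.glue hd h1 (h2.perm σ s0) ?_ ?_
    · intro x' hx' y' hy' hxy'
      obtain ⟨rfl, rfl⟩ := ec_le_one hec hx hy hxy hx' hy' hxy'
      rw [← s1, Sym2.eq_swap]
    · intro x' hx' y' hy' hxy'
      obtain ⟨rfl, rfl⟩ := ec_le_one hec hx hy hxy hx' hy' hxy'
      rw [hN.sc, hM.sc]
      simp only [s1, s2, s3]
      exact nrm p1 p2 p3 p1 p2 p3 (Or.inl ⟨rfl, rfl⟩)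
  · refine Col.glue hd h1 h2 ?_ ?_
    · intro x hx y hy hxy; exact absurd ⟨x, hx, y, hy, hxy⟩ hk
    · intro x hx y hy hxy; exact absurd ⟨x, hx, y, hy, hxy⟩ hk

end col
end NC

set_option linter.unusedSectionVars false
namespace NC
section ends
variable {V : Type*} [Fintype V] [DecidableEq V] {G : SimpleGraph V} [DecidableRel G.Adj]

lemma bs_pairs {M : Type*} [AddCommMonoid M] (f : Sym2 V → M) {A B : Finset V} (S : Finset (V × V))
    (h1 : ∀ x ∈ A, ∀ y ∈ B, G.Adj x y → (x, y) ∈ S)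
    (h2 : ∀ p ∈ S, p.1 ∈ A ∧ p.2 ∈ B ∧ G.Adj p.1 p.2) :
    bs G f A B = ∑ p ∈ S, f s(p.1, p.2) := by
  have : S = (A ×ˢ B).filter (fun p => G.Adj p.1 p.2) := by
    ext ⟨x, y⟩
    simp only [Finset.mem_filter, Finset.mem_product]
    constructor
    · intro h; have := h2 _ h; tauto
    · rintro ⟨⟨hx, hy⟩, h⟩; exact h1 x hx y hy h
  rw [this, Finset.sum_filter, Finset.sum_product]
  rfl

lemma unsplit3 {K : Finset V} (h3 : dd G K = 3) (h : ∀ K' ⊆ K, K'.Nonempty → 3 ≤ dd G K') :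
    ∀ K' ⊆ K, K'.Nonempty → K' ≠ K → 2 ≤ ec G K' (K \ K') := by
  intro K' hK' hne hn
  have h1 := h K' hK' hne
  have h2 := h (K \ K') Finset.sdiff_subset (Finset.sdiff_nonempty.mpr fun h' =>
    hn (Finset.Subset.antisymm hK' h'))
  have := dd_union (G := G) (A := K') (B := K \ K') Finset.disjoint_sdiff
  rw [Finset.union_sdiff_of_subset hK'] at this
  omega

lemma SC.pass {D : Finset V} {c0 : Sym2 V → ZMod 2} (h : SC G D c0) {s t : V} (hs : s ∈ D)
    (ht : t ∈ D) (hst : s ≠ t) : ∃ z, G.Adj s z ∧ c0 s(s, z) ≠ 0 := by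
  obtain ⟨w⟩ := h.conn s hs t ht
  cases w with
  | nil => exact absurd rfl hst
  | cons h _ => exact ⟨_, h.1, h.2⟩

/-- the pass predicate -/
def Pass (G : SimpleGraph V) (F : Sym2 V → T) (s : V) : Prop := ∃ z, G.Adj s z ∧ (F s(s, z)).1 ≠ 0

/-- piece with two marked boundary edges, through which `c` passes -/
lemma piece {X : Finset V} (hX2 : ∀ K ⊆ X, K.Nonempty → 3 ≤ dd G K)
    (hX : ∀ K ⊆ X, K.Nonempty → K ≠ X → 2 ≤ ec G K (X \ K)) {s t a b : V} (hs : s ∈ X) (ht : t ∈ X)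
    (hst : s ≠ t) (ha : a ∉ X) (hb : b ∉ X) (hsa : G.Adj s a) (htb : G.Adj t b) :
    ∃ F, RF G X F ∧ Pass G F s ∧ Pass G F t := by
  obtain ⟨D, c0, hDX, hDs, hDt, hS⟩ := menger hX hs ht
  obtain ⟨F', hF'⟩ := L1' (G := G) (X \ D) (fun K' h h' => by
    have := hX2 K' (h.trans Finset.sdiff_subset) h'; omega)
  obtain ⟨F, hF, -, -, -, hc⟩ := absorb hDX hS hF' hDs hDt ha hb hsa htb (by
    intro h
    exact hst (s_inj hs hb h).1) 0
  obtain ⟨z, hz, hz'⟩ := hS.pass hDs hDt hst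
  obtain ⟨z2, hz2, hz2'⟩ := hS.pass hDt hDs hst.symm
  exact ⟨F, hF, ⟨z, hz, hc _ _ hz hz'⟩, ⟨z2, hz2, hc _ _ hz2 hz2'⟩⟩

lemma four_sum {p q y1 y2 : T} (h : p + q + y1 + y2 = 0) (hy : y1 ≠ y2) : p ≠ q := by
  rintro rfl
  rw [t_two, zero_add] at h
  apply hy
  have := t_sum' (a := y1) (b := y2) (d := 0) (by rw [add_zero]; exact h)
  rwa [add_zero] at this

structure Y4 (G : SimpleGraph V) [DecidableRel G.Adj] (Y : Finset V) (w1 w2 s t s' t' : V) :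
    Prop where
  sub : ∀ K ⊆ Y, K.Nonempty → 3 ≤ dd G K
  hw1 : w1 ∉ Y
  hw2 : w2 ∉ Y
  hw : w1 ≠ w2
  hs : s ∈ Y
  ht : t ∈ Y
  hs' : s' ∈ Y
  ht' : t' ∈ Y
  n1 : s ≠ t
  n2 : s ≠ s'
  n3 : s ≠ t'
  n4 : t ≠ s'
  n5 : t ≠ t'
  n6 : s' ≠ t'
  as : G.Adj s w2
  at' : G.Adj t w2
  as' : G.Adj s' w1
  at'' : G.Adj t' w1
  bd : ∀ x ∈ Y, ∀ y, y ∉ Y → G.Adj x y →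
    (y = w2 ∧ (x = s ∨ x = t)) ∨ (y = w1 ∧ (x = s' ∨ x = t'))

lemma Y4.bsum {Y : Finset V} {w1 w2 s t s' t' : V} (h : Y4 G Y w1 w2 s t s' t') {M : Type*}
    [AddCommMonoid M] (f : Sym2 V → M) : bs G f Y Yᶜ =
      f s(s, w2) + f s(t, w2) + f s(s', w1) + f s(t', w1) := by
  rw [bs_pairs f {(s, w2), (t, w2), (s', w1), (t', w1)}]
  · rw [Finset.sum_insert, Finset.sum_insert, Finset.sum_pair]
    · simp only [add_assoc]
    all_goals simp [h.n1, h.n2, h.n3, h.n4, h.n5, h.n6]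
  · intro x hx y hy hxy
    rw [Finset.mem_compl] at hy
    have := h.bd x hx y hy hxy
    simp only [Finset.mem_insert, Finset.mem_singleton, Prod.mk.injEq]
    tauto
  · intro p hp
    simp only [Finset.mem_insert, Finset.mem_singleton] at hp
    simp only [Finset.mem_compl]
    rcases hp with rfl | rfl | rfl | rfl
    · exact ⟨h.hs, h.hw2, h.as⟩
    · exact ⟨h.ht, h.hw2, h.at'⟩
    · exact ⟨h.hs', h.hw1, h.as'⟩
    · exact ⟨h.ht', h.hw1, h.at''⟩

lemma Y4.swap {Y : Finset V} {w1 w2 s t s' t' : V} (h : Y4 G Y w1 w2 s t s' t') :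
    Y4 G Y w1 w2 s t t' s' :=
  ⟨h.sub, h.hw1, h.hw2, h.hw, h.hs, h.ht, h.ht', h.hs', h.n1, h.n3, h.n2, h.n5, h.n4, h.n6.symm,
    h.as, h.at', h.at'', h.as', fun x hx y hy hxy => by
      have := h.bd x hx y hy hxy; tauto⟩

lemma Y4.dd4 {Y : Finset V} {w1 w2 s t s' t' : V} (h : Y4 G Y w1 w2 s t s' t') : dd G Y = 4 := by
  unfold dd ec
  rw [h.bsum]

/-- the edges from a piece -/
lemma Y4.ecK {Y : Finset V} {w1 w2 s t s' t' : V} (h : Y4 G Y w1 w2 s t s' t') {K : Finset V}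
    (hK : K ⊆ Y) : ec G K Yᶜ = (if s ∈ K then 1 else 0) + (if t ∈ K then 1 else 0) +
      (if s' ∈ K then 1 else 0) + (if t' ∈ K then 1 else 0) := by
  have : ec G K Yᶜ = bs G (fun e => if ∃ z ∈ e, z ∈ K then (1 : ℕ) else 0) Y Yᶜ := by
    have e1 : Y = K ∪ (Y \ K) := (Finset.union_sdiff_of_subset hK).symm
    have : bs G (fun e => if ∃ z ∈ e, z ∈ K then (1 : ℕ) else 0) (K ∪ (Y \ K)) Yᶜ = ec G K Yᶜ := by
      rw [bs_union_left _ _ Finset.disjoint_sdiff]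
      rw [bs_zero (A := Y \ K), add_zero]
      · refine bs_congr ?_
        intro v hv w _ _
        beta_reduce
        rw [if_pos ⟨v, by simp, hv⟩]
      · intro v hv w hw hvw
        rw [if_neg]
        rintro ⟨z, hz, hzK⟩
        rcases Sym2.mem_iff.mp hz with rfl | rfl
        · exact (Finset.mem_sdiff.mp hv).2 hzK
        · exact (Finset.mem_compl.mp hw) (hK hzK)
    rw [← e1] at this
    exact this.symm
  rw [this, h.bsum]
  have h1 : w1 ∉ K := fun h' => h.hw1 (hK h')
  have h2 : w2 ∉ K := fun h' => h.hw2 (hK h')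
  have key : ∀ x w, w ∉ K → ((∃ z ∈ s(x, w), z ∈ K) ↔ x ∈ K) := by
    intro x w hw
    constructor
    · rintro ⟨z, hz, hzK⟩
      rcases Sym2.mem_iff.mp hz with rfl | rfl
      · exact hzK
      · exact absurd hzK hw
    · exact fun h => ⟨x, by simp, h⟩
  simp only [key _ _ h1, key _ _ h2]

/-- a part with three boundary edges -/
lemma three_ne {Y K : Finset V} (hKY : K ⊆ Y) {F : Sym2 V → T} (hF : RF G K F) (hec : ec G K (Y \ K) ≤ 1)
    {s t a b : V} (hs : s ∈ K) (ht : t ∈ K) (hst : s ≠ t) (ha : a ∉ Y) (hb : b ∉ Y)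
    (hsa : G.Adj s a) (htb : G.Adj t b)
    (hbd : ∀ x ∈ K, ∀ y, y ∉ Y → G.Adj x y → (x = s ∧ y = a) ∨ (x = t ∧ y = b))
    {x z : V} (hx : x ∈ K) (hz : z ∈ Y \ K) (hxz : G.Adj x z) :
    F s(s, a) + F s(t, b) + F s(x, z) = 0 := by
  have h0 := cutsum t_two hF.fl
  have hzY := (Finset.mem_sdiff.mp hz)
  rw [bs_pairs F {(s, a), (t, b), (x, z)}] at h0
  · rw [Finset.sum_insert, Finset.sum_pair] at h0
    · rw [add_assoc]; exact h0
    · intro h; rw [Prod.mk.injEq] at h; exact hb (h.2 ▸ hzY.1)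
    · simp only [Finset.mem_insert, Finset.mem_singleton, Prod.mk.injEq, not_or]
      exact ⟨fun h => hst h.1, fun h => ha (h.2 ▸ hzY.1)⟩
  · intro x' hx' y' hy' hxy'
    rw [Finset.mem_compl] at hy'
    simp only [Finset.mem_insert, Finset.mem_singleton, Prod.mk.injEq]
    by_cases hyY : y' ∈ Y
    · obtain ⟨rfl, rfl⟩ := ec_le_one hec hx hz hxz hx' (by simp [hyY, hy']) hxy'
      simp
    · have := hbd x' hx' y' hyY hxy'
      tauto
  · intro p hp
    simp only [Finset.mem_insert, Finset.mem_singleton] at hp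
    simp only [Finset.mem_compl]
    rcases hp with rfl | rfl | rfl
    · exact ⟨hs, fun h => ha (hKY h), hsa⟩
    · exact ⟨ht, fun h => hb (hKY h), htb⟩
    · exact ⟨hx, hzY.2, hxz⟩

/-- case (b) of a split -/
lemma Y4.caseB {Y : Finset V} {w1 w2 s t s' t' : V} (h : Y4 G Y w1 w2 s t s' t') {K : Finset V}
    (hK : K ⊆ Y) (hec : ec G K (Y \ K) ≤ 1) (h3 : dd G K = 3) (h3' : dd G (Y \ K) = 3)
    (hs : s ∈ K) (hs' : s' ∈ K) (ht : t ∉ K) (ht' : t' ∉ K) :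
    ∃ F, RF G Y F ∧ F s(s, w2) ≠ F s(t, w2) ∧ Pass G F s ∧ Pass G F t := by
  have sub1 : ∀ K' ⊆ K, K'.Nonempty → 3 ≤ dd G K' := fun K' h1 h2 => h.sub K' (h1.trans hK) h2
  have sub2 : ∀ K' ⊆ Y \ K, K'.Nonempty → 3 ≤ dd G K' := fun K' h1 h2 =>
    h.sub K' (h1.trans Finset.sdiff_subset) h2
  have w1' : w1 ∉ K := fun h' => h.hw1 (hK h')
  have w2' : w2 ∉ K := fun h' => h.hw2 (hK h')
  have w1'' : w1 ∉ Y \ K := fun h' => h.hw1 (Finset.mem_sdiff.mp h').1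
  have w2'' : w2 ∉ Y \ K := fun h' => h.hw2 (Finset.mem_sdiff.mp h').1
  have tY : t ∈ Y \ K := by simp [h.ht, ht]
  have tY' : t' ∈ Y \ K := by simp [h.ht', ht']
  obtain ⟨F1, hF1, p1, -⟩ := piece sub1 (unsplit3 h3 sub1) hs hs' h.n2 w2' w1' h.as h.as'
  obtain ⟨F2, hF2, p2, -⟩ := piece sub2 (unsplit3 h3' sub2) tY tY' h.n5 w2'' w1'' h.at' h.at''
  obtain ⟨F, g, hF, -, hg, a1, a2⟩ := glue1 Finset.disjoint_sdiff hF1 hF2 hec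
    (F2 s(t, w2)).2 (F1 s(s, w2)).2 (hF2.bd2 tY h.at' w2'') (by
      intro x hx z hz hxz heq
      have := three_ne hK hF1 hec hs hs' h.n2 h.hw2 h.hw1 h.as h.as' (by
        intro x hx y hy hxy
        rcases h.bd x (hK hx) y hy hxy with ⟨rfl, rfl | rfl⟩ | ⟨rfl, rfl | rfl⟩
        · simp
        · exact absurd hx ht
        · simp
        · exact absurd hx ht') hx hz hxz
      have e : F1 s(s, w2) = F1 s(x, z) := by
        refine Prod.ext ?_ heq
        rw [hF1.bd s hs w2 h.as w2', hF1.bd x hx z hxz (Finset.mem_sdiff.mp hz).2]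
      rw [e, add_right_comm, t_two, zero_add] at this
      exact hF1.nz s' hs' w1 h.as' this)
  rw [Finset.union_sdiff_of_subset hK] at hF
  refine ⟨F, hF, ?_, ?_, ?_⟩
  · rw [a1 s hs w2 h.as, a2 t tY w2 h.at']
    intro h
    rw [h] at hg
    exact hg rfl
  · obtain ⟨z, hz, hz'⟩ := p1
    exact ⟨z, hz, by rw [a1 s hs z hz]; exact hz'⟩
  · obtain ⟨z, hz, hz'⟩ := p2
    exact ⟨z, hz, by rw [a2 t tY z hz]; exact hz'⟩

/-- case (a) of a split -/
lemma Y4.caseA {Y : Finset V} {w1 w2 s t s' t' : V} (h : Y4 G Y w1 w2 s t s' t') {K : Finset V}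
    (hK : K ⊆ Y) (hec : ec G K (Y \ K) = 1) (h3 : dd G K = 3)
    (hs : s ∈ K) (hs' : s' ∉ K) (ht : t ∈ K) (ht' : t' ∉ K) :
    ∃ F, RF G Y F ∧ F s(s, w2) ≠ F s(t, w2) ∧ Pass G F s ∧ Pass G F t := by
  have sub1 : ∀ K' ⊆ K, K'.Nonempty → 3 ≤ dd G K' := fun K' h1 h2 => h.sub K' (h1.trans hK) h2
  have w2' : w2 ∉ K := fun h' => h.hw2 (hK h')
  obtain ⟨F1, hF1, p1, p2⟩ := piece sub1 (unsplit3 h3 sub1) hs ht h.n1 w2' w2' h.as h.at'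
  obtain ⟨F2, hF2⟩ := L1' (G := G) (Y \ K) (fun K' h1 h2 => by
    have := h.sub K' (h1.trans Finset.sdiff_subset) h2; omega)
  obtain ⟨F, hF, a1⟩ := glue0 Finset.disjoint_sdiff hF1 hF2 hec.le
  rw [Finset.union_sdiff_of_subset hK] at hF
  refine ⟨F, hF, ?_, ?_, ?_⟩
  · rw [a1 s hs w2 h.as, a1 t ht w2 h.at']
    intro heq
    obtain ⟨x, hx, z, hz, hxz, -⟩ := ec_gt (G := G) K (Y \ K) ∅ (by
      rw [Finset.card_empty]; omega)
    have := three_ne hK hF1 hec.le hs ht h.n1 h.hw2 h.hw2 h.as h.at' (by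
        intro x hx y hy hxy
        rcases h.bd x (hK hx) y hy hxy with ⟨rfl, rfl | rfl⟩ | ⟨rfl, rfl | rfl⟩
        · simp
        · simp
        · exact absurd hx hs'
        · exact absurd hx ht') hx hz hxz
    rw [heq, t_two, zero_add] at this
    exact hF1.nz x hx z hxz this
  · obtain ⟨z, hz, hz'⟩ := p1
    exact ⟨z, hz, by rw [a1 s hs z hz]; exact hz'⟩
  · obtain ⟨z, hz, hz'⟩ := p2
    exact ⟨z, hz, by rw [a1 t ht z hz]; exact hz'⟩

/-- free pair case -/
lemma Y4.caseF {Y : Finset V} {w1 w2 s t s' t' : V} (h : Y4 G Y w1 w2 s t s' t')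
    {D : Finset V} {c0 : Sym2 V → ZMod 2} (hDX : D ⊆ Y) (hS : SC G D c0) (hs : s ∈ D) (ht : t ∈ D)
    (hs' : s' ∈ D) :
    ∃ F, RF G Y F ∧ F s(s, w2) ≠ F s(t, w2) ∧ Pass G F s ∧ Pass G F t := by
  obtain ⟨F', hF'⟩ := L1' (G := G) (Y \ D) (fun K' h1 h2 => by
    have := h.sub K' (h1.trans Finset.sdiff_subset) h2; omega)
  obtain ⟨F, hF, hFX, hFo, hFw, hc⟩ := absorb hDX hS hF' hs' hs h.hw1 h.hw2 h.as' h.as (by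
    intro h'
    exact h.n2 (s_inj h.hs' h.hw2 h').1.symm) (if t' ∈ D then (1, 0) else (F' s(t', w1)).2)
  obtain ⟨z, hz, hz'⟩ := hS.pass hs ht h.n1
  obtain ⟨z2, hz2, hz2'⟩ := hS.pass ht hs h.n1.symm
  refine ⟨F, hF, ?_, ⟨z, hz, hc _ _ hz hz'⟩, ⟨z2, hz2, hc _ _ hz2 hz2'⟩⟩
  have h0 := cutsum t_two hF.fl
  rw [h.bsum] at h0
  refine four_sum h0 ?_
  by_cases ht' : t' ∈ D
  · rw [if_pos ht'] at hFw
    rw [hFo t' w1 ht' h.hw1 h.at'' (by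
      intro h'
      exact h.n6 (s_inj h.ht' h.hw1 h').1.symm) (by
      intro h'
      exact h.n3 (s_inj h.ht' h.hw2 h').1.symm)]
    intro h
    rw [h] at hFw
    exact hFw rfl
  · rw [if_neg ht'] at hFw
    rw [hFX t' w1 (by simp [h.ht', ht']) h.at'']
    intro h
    rw [h] at hFw
    exact hFw rfl

lemma Y4.main {Y : Finset V} {w1 w2 s t s' t' : V} (h : Y4 G Y w1 w2 s t s' t') :
    ∃ F, RF G Y F ∧ F s(s, w2) ≠ F s(t, w2) ∧ Pass G F s ∧ Pass G F t := by
  by_cases hsp : ∃ K ⊆ Y, s ∈ K ∧ K ≠ Y ∧ ec G K (Y \ K) ≤ 1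
  · obtain ⟨K, hK, hsK, hne, hec⟩ := hsp
    have d1 := h.sub K hK ⟨s, hsK⟩
    have d2 := h.sub (Y \ K) Finset.sdiff_subset (Finset.sdiff_nonempty.mpr fun h' =>
      hne (Finset.Subset.antisymm hK h'))
    have d3 := dd_union (G := G) (A := K) (B := Y \ K) Finset.disjoint_sdiff
    rw [Finset.union_sdiff_of_subset hK, h.dd4] at d3
    have d4 := dd_sub (G := G) hK
    rw [h.ecK hK, if_pos hsK] at d4
    by_cases h1 : t ∈ K <;> by_cases h2 : s' ∈ K <;> by_cases h3 : t' ∈ K <;>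
      simp only [h1, h2, h3, if_true, if_false] at d4
    · omega
    · omega
    · omega
    · exact h.caseA hK (by omega) (by omega) hsK h2 h1 h3
    · omega
    · exact h.caseB hK hec (by omega) (by omega) hsK h2 h1 h3
    · exact h.swap.caseB hK hec (by omega) (by omega) hsK h3 h1 h2
    · omega
  · push Not at hsp
    have hsp' : ∀ K ⊆ Y, K.Nonempty → K ≠ Y → 2 ≤ ec G K (Y \ K) := by
      intro K hK hne hKX
      by_cases hvK : s ∈ K
      · exact hsp K hK hvK hKX
      · have := hsp (Y \ K) Finset.sdiff_subset (by simp [h.hs, hvK]) (by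
          intro h
          obtain ⟨z, hz⟩ := hne
          have : z ∈ Y \ K := by rw [h]; exact hK hz
          exact (Finset.mem_sdiff.mp this).2 hz)
        rw [ec_comm, Finset.sdiff_sdiff_eq_self hK] at this
        exact this
    obtain ⟨D, c0, hDX, hDs, hDt, hS⟩ := menger hsp' h.hs h.ht
    by_cases h1 : s' ∈ D
    · exact h.caseF hDX hS hDs hDt h1
    by_cases h2 : t' ∈ D
    · exact h.swap.caseF hDX hS hDs hDt h2
    have hs' : s' ∈ Y \ D := by simp [h.hs', h1]
    have ht' : t' ∈ Y \ D := by simp [h.ht', h2]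
    have w1' : w1 ∉ Y \ D := fun h' => h.hw1 (Finset.mem_sdiff.mp h').1
    obtain ⟨F', hF', hne⟩ := L2 (G := G) _ (Y \ D) le_rfl (fun K' h1 h2 =>
      h.sub K' (h1.trans Finset.sdiff_subset) h2) s' w1 t' w1 hs' ht' w1' w1' h.as' h.at'' (by
        intro h'
        exact h.n6 (s_inj h.hs' h.hw1 h').1)
    obtain ⟨F, hF, hFX, -, -, hc⟩ := absorb hDX hS hF' hDs hDt h.hw2 h.hw2 h.as h.at' (by
      intro h'
      exact h.n1 (s_inj h.hs h.hw2 h').1) 0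
    obtain ⟨z, hz, hz'⟩ := hS.pass hDs hDt h.n1
    obtain ⟨z2, hz2, hz2'⟩ := hS.pass hDt hDs h.n1.symm
    refine ⟨F, hF, ?_, ⟨z, hz, hc _ _ hz hz'⟩, ⟨z2, hz2, hc _ _ hz2 hz2'⟩⟩
    have h0 := cutsum t_two hF.fl
    rw [h.bsum] at h0
    refine four_sum h0 ?_
    rw [hFX s' w1 hs' h.as', hFX t' w1 ht' h.at'']
    exact hne

end ends
end NC

set_option linter.unusedSectionVars false
namespace NC
set_option synthInstance.maxSize 10000
set_option synthInstance.maxHeartbeats 400000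
lemma dist_dec : ∀ p q : T, p.1 = 0 → q.1 = 0 → p ≠ 0 → q ≠ 0 → p ≠ q → ∀ a d : T, a.1 ≠ 0 →
    d.1 ≠ 0 → ∃ x : T, x.1 ≠ 0 ∧ x ≠ a ∧ x ≠ a + p ∧ x ≠ d ∧ x ≠ d + q := by
  decide +kernel

lemma two_dec : ∀ p q : T, p.1 = 0 → q.1 = 0 → p ≠ 0 → q ≠ 0 → p ≠ q → ∀ y z : T, y.1 = 0 →
    z.1 = 0 → y ≠ 0 → z ≠ 0 → p + q + y + z = 0 → (y = p ∧ z = q) ∨ (y = q ∧ z = p) := by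
  decide +kernel

section ends
variable {V : Type*} [Fintype V] [DecidableEq V] {G : SimpleGraph V} [DecidableRel G.Adj]

lemma fin_col (hc : Cub G) {A : Finset V} {c : Sym2 V → T} {w o s t e f e' f' : V}
    (hf : ∀ v ∈ A, bs G c {v} Finset.univ = 0) (hn : ∀ v ∈ A, ∀ w, G.Adj v w → c s(v, w) ≠ 0)
    (ho : o ∉ insert w A) (hN : Nb G w o s t)
    (hs : Nb G s w e f) (ht : Nb G t w e' f') (hsA : s ∈ A) (htA : t ∈ A)
    (h0 : c s(w, o) ≠ 0) (h1 : c s(w, o) ≠ c s(w, s)) (h2 : c s(w, o) ≠ c s(w, t))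
    (h3 : c s(w, s) ≠ c s(w, t))
    (d1 : c s(w, o) ≠ c s(s, e)) (d2 : c s(w, o) ≠ c s(s, f))
    (d3 : c s(w, t) ≠ c s(s, e)) (d4 : c s(w, t) ≠ c s(s, f))
    (d5 : c s(w, o) ≠ c s(t, e')) (d6 : c s(w, o) ≠ c s(t, f'))
    (d7 : c s(w, s) ≠ c s(t, e')) (d8 : c s(w, s) ≠ c s(t, f')) :
    Col G (insert w A) c := by
  have hA := fl_col hc hf hn
  have hsw : c s(w, s) ≠ 0 := by rw [Sym2.eq_swap]; exact hn s hsA w hs.a1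
  have htw : c s(w, t) ≠ 0 := by rw [Sym2.eq_swap]; exact hn t htA w ht.a1
  have key : ∀ v ∈ A, G.Adj w v →
      ((Sc G c w ∪ Sc G c v).card = 3 ∨ (Sc G c w ∪ Sc G c v).card = 5) := by
    intro v hv hwv
    rcases (hN.adj v).mp hwv with rfl | rfl | rfl
    · exact absurd (Finset.mem_insert_of_mem hv) ho
    · obtain ⟨q1, q2, q3, -⟩ := hA.ne hv hs
      rw [hN.rot.sc, hs.sc]
      rw [Sym2.eq_swap (a := v) (b := w)] at q1 q2 ⊢
      exact nrm h3 h1.symm h2.symm q1 q2 q3 (Or.inr (Or.inr ⟨d3, d4, d1, d2⟩))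
    · obtain ⟨q1, q2, q3, -⟩ := hA.ne hv ht
      rw [hN.rot.rot.sc, ht.sc]
      rw [Sym2.eq_swap (a := v) (b := w)] at q1 q2 ⊢
      exact nrm h2.symm h3.symm h1 q1 q2 q3 (Or.inr (Or.inr ⟨d5, d6, d7, d8⟩))
  refine ⟨?_, ?_, ?_⟩
  · intro v hv
    rcases Finset.mem_insert.mp hv with rfl | hv
    · rw [hN.sc]; simp [Ne.symm h0, Ne.symm hsw, Ne.symm htw]
    · exact hA.nz v hv
  · intro v hv
    rcases Finset.mem_insert.mp hv with rfl | hv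
    · rw [hN.sc, Finset.card_eq_three]; exact ⟨_, _, _, h1, h2, h3, rfl⟩
    · exact hA.c3 v hv
  · intro v hv u hu hvu
    rcases Finset.mem_insert.mp hv with h4 | h4 <;> rcases Finset.mem_insert.mp hu with h5 | h5
    · exact absurd (h4.trans h5.symm) hvu.ne
    · rw [h4] at hvu ⊢; exact key u h5 hvu
    · rw [h5] at hvu ⊢; rw [Finset.union_comm]; exact key v h4 hvu.symm
    · exact hA.nm v h4 u h5 hvu

lemma triF (hc : Cub G) {K : Finset V} (hsub : ∀ K' ⊆ K, K'.Nonempty → 3 ≤ dd G K') {t w : V}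
    (ht : t ∈ K) (hw : w ∉ K) (htw : G.Adj t w) :
    ∃ F, RF G K F ∧ ∀ z, G.Adj t z → (F s(t, z)).1 = 0 := by
  by_cases hz : ∃ z, z ≠ w ∧ z ∉ K ∧ G.Adj t z
  · obtain ⟨z, hzw, hzK, hz⟩ := hz
    obtain ⟨d, hN⟩ := hc.nb2 htw hz hzw.symm
    obtain ⟨F, hF⟩ := L1' (G := G) K (fun K' h h' => by have := hsub K' h h'; omega)
    refine ⟨F, hF, ?_⟩
    have h1 := hF.bd t ht w htw hw
    have h2 := hF.bd t ht z hz hzK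
    have h3 := hF.fl t ht
    rw [hN.bs] at h3
    have h4 := congrArg Prod.fst (t_sum _ _ _ h3)
    simp only [Prod.fst_add, h1, h2, add_zero] at h4
    intro y hy
    rcases (hN.adj y).mp hy with rfl | rfl | rfl <;> assumption
  · push Not at hz
    obtain ⟨a, b, hN⟩ := hc.nb1 htw
    have haK : a ∈ K := by_contra fun h => hz a hN.n1.symm h hN.a2
    have hbK : b ∈ K := by_contra fun h => hz b hN.n2.symm h hN.a3
    have ha : a ∈ K \ {t} := by simp [haK, hN.a2.ne.symm]
    have hb : b ∈ K \ {t} := by simp [hbK, hN.a3.ne.symm]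
    have ht' : t ∉ K \ {t} := by simp
    obtain ⟨F0, hF0, hne⟩ := L2 (G := G) _ (K \ {t}) le_rfl
      (fun K' h h' => hsub K' (h.trans Finset.sdiff_subset) h') a t b t ha hb ht' ht'
      hN.a2.symm hN.a3.symm (by
        intro h
        exact hN.n3 (s_inj ha ht' h).1)
    have e1 := hF0.bd a ha t hN.a2.symm ht'
    have e2 := hF0.bd b hb t hN.a3.symm ht'
    set F : Sym2 V → T := fun e => if e = s(t, w) then F0 s(a, t) + F0 s(b, t) else F0 e with hFd
    have hFa : ∀ x y, x ∈ K \ {t} → F s(x, y) = F0 s(x, y) := by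
      intro x y hx
      simp only [hFd]
      rw [if_neg]
      intro h
      rcases Sym2.eq_iff.mp h with h | h
      · rw [h.1] at hx; exact ht' hx
      · rw [h.1] at hx; exact hw (Finset.mem_sdiff.mp hx).1
    have f1 : F s(t, w) = F0 s(a, t) + F0 s(b, t) := by simp [hFd]
    have f2 : F s(t, a) = F0 s(a, t) := by rw [Sym2.eq_swap]; exact hFa _ _ ha
    have f3 : F s(t, b) = F0 s(b, t) := by rw [Sym2.eq_swap]; exact hFa _ _ hb
    have g1 : (F s(t, w)).1 = 0 := by rw [f1]; simp [e1, e2]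
    have cas : ∀ v ∈ K, v = t ∨ v ∈ K \ {t} := by
      intro v hv; by_cases h : v = t <;> simp [h, hv]
    refine ⟨F, ⟨?_, ?_, ?_⟩, ?_⟩
    · intro v hv
      rcases cas v hv with rfl | hv
      · rw [hN.bs, f1, f2, f3]
        have := t_two (F0 s(a, v))
        have h' := t_two (F0 s(b, v))
        calc _ = (F0 s(a, v) + F0 s(a, v)) + (F0 s(b, v) + F0 s(b, v)) := by abel
          _ = 0 := by rw [this, h', add_zero]
      · rw [← hF0.fl v hv]
        refine bs_congr ?_
        intro x hx y _ _
        rw [Finset.mem_singleton.mp hx]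
        exact hFa _ _ hv
    · intro v hv y hy
      rcases cas v hv with rfl | hv
      · rcases (hN.adj y).mp hy with rfl | rfl | rfl
        · rw [f1]
          intro h
          apply hne
          have := t_sum' (a := F0 s(a, v)) (b := F0 s(b, v)) (d := 0) (by rw [add_zero]; exact h)
          rwa [add_zero] at this
        · rw [f2]; exact hF0.nz _ ha _ hN.a2.symm
        · rw [f3]; exact hF0.nz _ hb _ hN.a3.symm
      · rw [hFa _ _ hv]; exact hF0.nz v hv y hy
    · intro v hv y hy hyK
      rcases cas v hv with rfl | hv
      · rcases (hN.adj y).mp hy with rfl | rfl | rfl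
        · exact g1
        · exact absurd haK hyK
        · exact absurd hbK hyK
      · rw [hFa _ _ hv]; exact hF0.bd v hv y hy (fun h => hyK (Finset.mem_sdiff.mp h).1)
    · intro y hy
      rcases (hN.adj y).mp hy with rfl | rfl | rfl
      · exact g1
      · rw [f2]; exact e1
      · rw [f3]; exact e2

structure End (G : SimpleGraph V) [DecidableRel G.Adj] (B : Finset V) (w1 w2 o1 o2 : V) : Prop where
  d2 : dd G B = 2
  sub : ∀ K ⊆ B, K.Nonempty → K ≠ B → 3 ≤ dd G K
  hw1 : w1 ∈ B
  hw2 : w2 ∈ B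
  ho1 : o1 ∉ B
  ho2 : o2 ∉ B
  a1 : G.Adj w1 o1
  a2 : G.Adj w2 o2
  ne : (w1, o1) ≠ (w2, o2)

lemma End.bd {B : Finset V} {w1 w2 o1 o2 : V} (h : End G B w1 w2 o1 o2) {x y : V} (hx : x ∈ B)
    (hy : y ∉ B) (hxy : G.Adj x y) : (x = w1 ∧ y = o1) ∨ (x = w2 ∧ y = o2) := by
  by_contra hcon
  have h0 := h.d2
  unfold dd at h0
  have := ec_ge (G := G) B Bᶜ {(x, y), (w1, o1), (w2, o2)} (by
    intro p hp
    simp only [Finset.mem_insert, Finset.mem_singleton] at hp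
    simp only [Finset.mem_compl]
    rcases hp with rfl | rfl | rfl
    · exact ⟨hx, hy, hxy⟩
    · exact ⟨h.hw1, h.ho1, h.a1⟩
    · exact ⟨h.hw2, h.ho2, h.a2⟩)
  rw [Finset.card_insert_of_notMem, Finset.card_pair h.ne] at this
  · omega
  · simp only [Finset.mem_insert, Finset.mem_singleton, Prod.mk.injEq]; exact hcon

lemma Nb.dd {v a b d : V} (h : Nb G v a b d) : dd G {v} = 3 := by
  unfold NC.dd
  rw [h.ecl]
  simp [h.a1.ne.symm, h.a2.ne.symm, h.a3.ne.symm]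

lemma End.wne (hc : Cub G) {B : Finset V} {w1 w2 o1 o2 : V} (h : End G B w1 w2 o1 o2) : w1 ≠ w2 := by
  rintro rfl
  have hne : o1 ≠ o2 := fun h' => h.ne (by rw [h'])
  obtain ⟨d, hN⟩ := hc.nb2 h.a1 h.a2 hne
  have h1 := hN.dd
  have h2 := dd_union (G := G) (A := {w1}) (B := B \ {w1}) Finset.disjoint_sdiff
  rw [Finset.union_sdiff_of_subset (by simpa using h.hw1), h.d2, h1, hN.ecl] at h2
  have h3 : o1 ∉ B \ {w1} := fun h' => h.ho1 (Finset.mem_sdiff.mp h').1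
  have h4 : o2 ∉ B \ {w1} := fun h' => h.ho2 (Finset.mem_sdiff.mp h').1
  rw [if_neg h3, if_neg h4] at h2
  have h5 : B ≠ {w1} := by
    intro h'
    have := h.d2
    rw [h', h1] at this
    omega
  have h6 : (B \ {w1}).Nonempty := by
    rw [Finset.sdiff_nonempty]
    intro h'
    exact h5 (Finset.Subset.antisymm h' (by simpa using h.hw1))
  have := h.sub (B \ {w1}) Finset.sdiff_subset h6 (by
    intro h'
    have := h.hw1
    rw [← h'] at this
    simp at this)
  split_ifs at h2 <;> omega

lemma End.nadj (hc : Cub G) {B : Finset V} {w1 w2 o1 o2 : V} (h : End G B w1 w2 o1 o2) :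
    ¬ G.Adj w1 w2 := by
  intro hadj
  have hw := h.wne hc
  obtain ⟨d, hN⟩ := hc.nb2 h.a1 hadj (fun h' => h.ho1 (h' ▸ h.hw2))
  obtain ⟨e, hM⟩ := hc.nb2 h.a2 hadj.symm (fun h' => h.ho2 (h' ▸ h.hw1))
  have hd : Disjoint ({w1} : Finset V) {w2} := by simpa using hw
  have h1 := dd_union (G := G) hd
  rw [hN.dd, hM.dd, hN.ecl, if_neg (by simpa using fun h' : o1 = w2 => h.ho1 (h' ▸ h.hw2)),
    if_pos (by simp), if_neg (by simpa using hN.n3.symm)] at h1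
  have hS : {w1} ∪ {w2} ⊆ B := by
    intro x hx
    simp at hx
    rcases hx with rfl | rfl
    · exact h.hw1
    · exact h.hw2
  have h2 := dd_union (G := G) (A := {w1} ∪ {w2}) (B := B \ ({w1} ∪ {w2})) Finset.disjoint_sdiff
  rw [Finset.union_sdiff_of_subset hS, h.d2, ec_union_left _ hd, hN.ecl, hM.ecl] at h2
  have h3 : o1 ∉ B \ ({w1} ∪ {w2}) := fun h' => h.ho1 (Finset.mem_sdiff.mp h').1
  have h4 : o2 ∉ B \ ({w1} ∪ {w2}) := fun h' => h.ho2 (Finset.mem_sdiff.mp h').1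
  have h7 : w1 ∉ B \ ({w1} ∪ {w2}) := by simp
  have h8 : w2 ∉ B \ ({w1} ∪ {w2}) := by simp
  rw [if_neg h3, if_neg h4, if_neg h7, if_neg h8] at h2
  have h5 : B ≠ {w1} ∪ {w2} := by
    intro h'
    have := h.d2
    rw [h'] at this
    omega
  have h6 : (B \ ({w1} ∪ {w2})).Nonempty := by
    rw [Finset.sdiff_nonempty]
    intro h'
    exact h5 (Finset.Subset.antisymm h' hS)
  have := h.sub (B \ ({w1} ∪ {w2})) Finset.sdiff_subset h6 (by
    intro h'
    have := h.hw1
    rw [← h'] at this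
    simp at this)
  split_ifs at h2 <;> omega

structure ECl (G : SimpleGraph V) [DecidableRel G.Adj] (B : Finset V) (c : Sym2 V → T)
    (w1 w2 o1 o2 s' t' s t : V) : Prop where
  col : Col G B c
  N1 : Nb G w1 o1 s' t'
  N2 : Nb G w2 o2 s t
  x : c s(w1, o1) ≠ c s(w2, o2)
  x1 : c s(w1, o1) ≠ c s(w2, s)
  x1' : c s(w1, o1) ≠ c s(w2, t)
  x2 : c s(w2, o2) ≠ c s(w1, s')
  x2' : c s(w2, o2) ≠ c s(w1, t')
  alt : (c s(w1, s') = c s(w2, s) ∧ c s(w1, t') = c s(w2, t)) ∨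
    (c s(w1, s') ≠ c s(w2, s) ∧ c s(w1, s') ≠ c s(w2, t) ∧
     c s(w1, t') ≠ c s(w2, s) ∧ c s(w1, t') ≠ c s(w2, t))

lemma fst_ne {a b : T} (h : a.1 ≠ b.1) : a ≠ b := fun h' => h (by rw [h'])

end ends
end NC

set_option linter.unusedSectionVars false
namespace NC
set_option synthInstance.maxSize 10000
set_option synthInstance.maxHeartbeats 400000
def pp : T := (1, 0, 0)
lemma pp1 : pp.1 ≠ 0 := by decide
lemma tri_dec : ∀ q y m : T, q.1 = 0 → y.1 = 0 → m.1 = 0 → q ≠ 0 → y ≠ 0 → m ≠ 0 → q + y + m = 0 →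
    (pp + y ≠ pp ∧ pp + y ≠ q ∧ pp ≠ q ∧ pp + y ≠ m ∧ pp + y ≠ pp + m ∧ q ≠ m ∧ q ≠ pp + m ∧
      pp + q ≠ pp + y ∧ pp + q ≠ pp) ∧ (pp + q ≠ q ∧ pp + y ≠ y ∧ pp + m ≠ pp ∧ pp + m ≠ q ∧ y ≠ pp ∧
      y ≠ q) ∧ (pp + m) + pp + m = 0 ∧ (pp + q) + (pp + m) + y = 0 := by
  decide +kernel

lemma pp_ne {y z : T} (hy : y.1 = 0) (hz : z.1 = 0) : pp + y ≠ z := by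
  apply fst_ne; rw [Prod.fst_add, hy, hz, add_zero]; exact pp1

section ends
variable {V : Type*} [Fintype V] [DecidableEq V] {G : SimpleGraph V} [DecidableRel G.Adj]

lemma ba3 {B K : Finset V} {w1 w2 s : V} (memK : ∀ x, x ∈ K ↔ x ∈ B ∧ x ≠ w1 ∧ x ≠ w2 ∧ x ≠ s)
    (h1 : w1 ∈ B) (h2 : w2 ∈ B) (h3 : s ∈ B) : B = insert w2 (insert w1 (insert s K)) := by
  ext x
  have := memK x
  have i1 : x = w1 → x ∈ B := fun e => e ▸ h1
  have i2 : x = w2 → x ∈ B := fun e => e ▸ h2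
  have i3 : x = s → x ∈ B := fun e => e ▸ h3
  simp only [Finset.mem_insert]
  tauto

lemma ba2 {B K : Finset V} {w1 w2 : V} (memK : ∀ x, x ∈ K ↔ x ∈ B ∧ x ≠ w1 ∧ x ≠ w2)
    (h1 : w1 ∈ B) (h2 : w2 ∈ B) : B = insert w2 (insert w1 K) := by
  ext x
  have := memK x
  have i1 : x = w1 → x ∈ B := fun e => e ▸ h1
  have i2 : x = w2 → x ∈ B := fun e => e ▸ h2
  simp only [Finset.mem_insert]
  tauto

lemma End.mem {B : Finset V} {w1 w2 o1 o2 : V} (h : End G B w1 w2 o1 o2) {x y : V} (hx : x ∈ B)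
    (hxy : G.Adj x y) (h1 : x ≠ w1 ∨ y ≠ o1) (h2 : x ≠ w2 ∨ y ≠ o2) : y ∈ B := by
  by_contra hy
  have := h.bd hx hy hxy
  tauto

lemma End.tri (hc : Cub G) {B : Finset V} {w1 w2 o1 o2 s t t' : V} (h : End G B w1 w2 o1 o2)
    (N1 : Nb G w1 o1 s t') (N2 : Nb G w2 o2 s t) : ∃ c, ECl G B c w1 w2 o1 o2 s t' s t := by
  have hw := h.wne hc
  have hna := h.nadj hc
  obtain ⟨m, Ns⟩ := hc.nb2 N1.a2.symm N2.a2.symm hw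
  have hsB : s ∈ B := h.mem h.hw1 N1.a2 (Or.inr N1.n1.symm) (Or.inl hw)
  have htB : t ∈ B := h.mem h.hw2 N2.a3 (Or.inl hw.symm) (Or.inr N2.n2.symm)
  have htB' : t' ∈ B := h.mem h.hw1 N1.a3 (Or.inr N1.n2.symm) (Or.inl hw)
  have s1 : s ≠ w1 := N1.a2.ne.symm
  have s2 : s ≠ w2 := N2.a2.ne.symm
  have hmB : m ∈ B := h.mem hsB Ns.a3 (Or.inl s1) (Or.inl s2)
  set K : Finset V := B \ {w1, w2, s} with hK
  have memK : ∀ x, x ∈ K ↔ x ∈ B ∧ x ≠ w1 ∧ x ≠ w2 ∧ x ≠ s := by intro x; simp [hK]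
  have htK : t ∈ K := (memK t).mpr ⟨htB, fun e => hna (e ▸ N2.a3.symm), N2.a3.ne.symm, N2.n3.symm⟩
  have htK' : t' ∈ K := (memK t').mpr ⟨htB', N1.a3.ne.symm, fun e => hna (e ▸ N1.a3), N1.n3.symm⟩
  have hmK : m ∈ K := (memK m).mpr ⟨hmB, Ns.n2.symm, Ns.n3.symm, Ns.a3.ne.symm⟩
  have k1 : w1 ∉ K := by simp [hK]
  have k2 : w2 ∉ K := by simp [hK]
  have k3 : s ∉ K := by simp [hK]
  obtain ⟨F, hF, hFt⟩ := triF hc (K := K) (fun K' h1 h2 => h.sub K' (h1.trans Finset.sdiff_subset) h2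
    (fun e => k1 (h1 (e ▸ h.hw1)))) htK k2 N2.a3.symm
  have hbd : ∀ x ∈ K, ∀ z ∈ Kᶜ, G.Adj x z → (x, z) ∈ ({(t, w2), (t', w1), (m, s)} : Finset (V × V)) := by
    intro x hx z hz hxz
    rw [Finset.mem_compl] at hz
    have hx' := (memK x).mp hx
    have hzB : z ∈ B := h.mem hx'.1 hxz (Or.inl hx'.2.1) (Or.inl hx'.2.2.1)
    have : z = w1 ∨ z = w2 ∨ z = s := by
      by_contra hcon
      push Not at hcon
      exact hz ((memK z).mpr ⟨hzB, hcon⟩)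
    simp only [Finset.mem_insert, Finset.mem_singleton, Prod.mk.injEq]
    rcases this with rfl | rfl | rfl
    · rcases (N1.adj x).mp hxz.symm with e | e | e
      · exact absurd (e ▸ hx'.1) h.ho1
      · exact absurd e hx'.2.2.2
      · exact Or.inr (Or.inl ⟨e, rfl⟩)
    · rcases (N2.adj x).mp hxz.symm with e | e | e
      · exact absurd (e ▸ hx'.1) h.ho2
      · exact absurd e hx'.2.2.2
      · exact Or.inl ⟨e, rfl⟩
    · rcases (Ns.adj x).mp hxz.symm with e | e | e
      · exact absurd e hx'.2.1
      · exact absurd e hx'.2.2.1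
      · exact Or.inr (Or.inr ⟨e, rfl⟩)
  have hsum := cutsum t_two hF.fl
  rw [bs_pairs F _ hbd (by
    intro p hp
    simp only [Finset.mem_insert, Finset.mem_singleton] at hp
    simp only [Finset.mem_compl]
    rcases hp with rfl | rfl | rfl
    · exact ⟨htK, k2, N2.a3.symm⟩
    · exact ⟨htK', k1, N1.a3.symm⟩
    · exact ⟨hmK, k3, Ns.a3.symm⟩), Finset.sum_insert (by simp [hw.symm, s2.symm]),
    Finset.sum_pair (by simp [s1.symm])] at hsum
  simp only at hsum
  rw [← add_assoc] at hsum
  obtain ⟨⟨c1, c2, c3, c4, c5, c6, c7, c8, c9⟩, ⟨c10, c11, c12, c13, c14, c15⟩, c16, c17⟩ :=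
    tri_dec _ _ _ (hF.bd t htK w2 N2.a3.symm k2) (hF.bd t' htK' w1 N1.a3.symm k1)
    (hF.bd m hmK s Ns.a3.symm k3) (hF.nz t htK w2 N2.a3.symm) (hF.nz t' htK' w1 N1.a3.symm)
    (hF.nz m hmK s Ns.a3.symm) hsum
  have b1 := hF.bd t htK w2 N2.a3.symm k2
  have b2 := hF.bd t' htK' w1 N1.a3.symm k1
  have b3 := hF.bd m hmK s Ns.a3.symm k3
  have nz2 := hF.nz t' htK' w1 N1.a3.symm
  have nz3 := hF.nz m hmK s Ns.a3.symm
  set q := F s(t, w2)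
  set y := F s(t', w1)
  set mm := F s(m, s)
  have o11 : o1 ≠ w1 := N1.a1.ne.symm
  have o12 : o1 ≠ w2 := fun e => h.ho1 (e ▸ h.hw2)
  have o1s : o1 ≠ s := N1.n1
  have o22 : o2 ≠ w2 := N2.a1.ne.symm
  have o21 : o2 ≠ w1 := fun e => h.ho2 (e ▸ h.hw1)
  have o2s : o2 ≠ s := N2.n1
  set c : Sym2 V → T := fun e => if e = s(w2, s) then pp else if e = s(w1, s) then pp + mm else
    if e = s(w1, o1) then pp + q else if e = s(w2, o2) then pp + y else F e with hcd
  have cK : ∀ x ∈ K, ∀ z, c s(x, z) = F s(x, z) := by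
    intro x hx z
    have hx' := (memK x).mp hx
    have x1 : x ≠ o1 := fun e => h.ho1 (e ▸ hx'.1)
    have x2 : x ≠ o2 := fun e => h.ho2 (e ▸ hx'.1)
    simp [hcd, hx'.2.1, hx'.2.2.1, hx'.2.2.2, x1, x2]
  have e1 : c s(w2, s) = pp := by simp [hcd]
  have e2 : c s(w1, s) = pp + mm := by simp [hcd, hw, s1.symm]
  have e3 : c s(w1, o1) = pp + q := by simp [hcd, hw, s1.symm, o1s, o11]
  have e4 : c s(w2, o2) = pp + y := by simp [hcd, hw.symm, s2.symm, o2s, o22, o12.symm]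
  have e5 : c s(w1, t') = y := by rw [Sym2.eq_swap]; exact cK _ htK' _
  have e6 : c s(w2, t) = q := by rw [Sym2.eq_swap]; exact cK _ htK _
  have e7 : c s(s, m) = mm := by rw [Sym2.eq_swap]; exact cK _ hmK _
  have e1' : c s(s, w2) = pp := by rw [Sym2.eq_swap]; exact e1
  have e2' : c s(s, w1) = pp + mm := by rw [Sym2.eq_swap]; exact e2
  obtain ⟨a, b, Nt⟩ := hc.nb1 N2.a3.symm
  have BA : B = insert w2 (insert w1 (insert s K)) := by
    exact ba3 memK h.hw1 h.hw2 hsB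
  have hcol : Col G B c := by
    rw [BA]
    have t1 : (c s(t, a)).1 = 0 := by rw [cK _ htK]; exact hFt _ Nt.a2
    have t2 : (c s(t, b)).1 = 0 := by rw [cK _ htK]; exact hFt _ Nt.a3
    have z0 : ∀ z : T, z.1 = 0 → pp ≠ z := fun z hz => fst_ne (by rw [hz]; exact pp1)
    refine fin_col hc (A := insert w1 (insert s K)) ?_ ?_ (BA ▸ h.ho2) N2 Ns.rot Nt (by simp) (by simp [htK])
      ?_ ?_ ?_ ?_ ?_ ?_ ?_ ?_ ?_ ?_ ?_ ?_
    · intro v hv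
      simp only [Finset.mem_insert] at hv
      rcases hv with rfl | rfl | hv
      · rw [N1.bs, e3, e2, e5]; exact c17
      · rw [Ns.bs, e2', e1', e7]; exact c16
      · rw [← hF.fl v hv]
        refine bs_congr ?_
        intro x hx y _ _
        rw [Finset.mem_singleton.mp hx]
        exact cK _ hv _
    · intro v hv z hz
      simp only [Finset.mem_insert] at hv
      rcases hv with rfl | rfl | hv
      · rcases (N1.adj z).mp hz with rfl | rfl | rfl
        · rw [e3]; exact pp_ne b1 rfl
        · rw [e2]; exact pp_ne b3 rfl
        · rw [e5]; exact nz2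
      · rcases (Ns.adj z).mp hz with rfl | rfl | rfl
        · rw [e2']; exact pp_ne b3 rfl
        · rw [e1']; exact z0 0 rfl
        · rw [e7]; exact nz3
      · rw [cK _ hv]; exact hF.nz v hv z hz
    · rw [e4]; exact pp_ne b2 rfl
    · rw [e4, e1]; exact c1
    · rw [e4, e6]; exact c2
    · rw [e1, e6]; exact c3
    · rw [e4, e7]; exact c4
    · rw [e4, e2']; exact c5
    · rw [e6, e7]; exact c6
    · rw [e6, e2']; exact c7
    · rw [e4]; exact pp_ne b2 t1
    · rw [e4]; exact pp_ne b2 t2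
    · rw [e1]; exact z0 _ t1
    · rw [e1]; exact z0 _ t2
  refine ⟨c, hcol, N1, N2, ?_, ?_, ?_, ?_, ?_, Or.inr ?_⟩
  · rw [e3, e4]; exact c8
  · rw [e3, e1]; exact c9
  · rw [e3, e6]; exact c10
  · rw [e4, e2]; exact c5
  · rw [e4, e5]; exact c11
  · rw [e2, e1, e6, e5]; exact ⟨c12, c13, c14, c15⟩

lemma End.dis (hc : Cub G) {B : Finset V} {w1 w2 o1 o2 s t s' t' : V} (h : End G B w1 w2 o1 o2)
    (N1 : Nb G w1 o1 s' t') (N2 : Nb G w2 o2 s t) (n2 : s ≠ s') (n3 : s ≠ t') (n4 : t ≠ s')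
    (n5 : t ≠ t') : ∃ c s' t', ECl G B c w1 w2 o1 o2 s' t' s t := by
  have hw := h.wne hc
  have hna := h.nadj hc
  have hsB : s ∈ B := h.mem h.hw2 N2.a2 (Or.inl hw.symm) (Or.inr N2.n1.symm)
  have htB : t ∈ B := h.mem h.hw2 N2.a3 (Or.inl hw.symm) (Or.inr N2.n2.symm)
  have hsB' : s' ∈ B := h.mem h.hw1 N1.a2 (Or.inr N1.n1.symm) (Or.inl hw)
  have htB' : t' ∈ B := h.mem h.hw1 N1.a3 (Or.inr N1.n2.symm) (Or.inl hw)
  set K : Finset V := B \ {w1, w2} with hK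
  have memK : ∀ x, x ∈ K ↔ x ∈ B ∧ x ≠ w1 ∧ x ≠ w2 := by intro x; simp [hK]
  have hsK : s ∈ K := (memK s).mpr ⟨hsB, fun e => hna (e ▸ N2.a2.symm), N2.a2.ne.symm⟩
  have htK : t ∈ K := (memK t).mpr ⟨htB, fun e => hna (e ▸ N2.a3.symm), N2.a3.ne.symm⟩
  have hsK' : s' ∈ K := (memK s').mpr ⟨hsB', N1.a2.ne.symm, fun e => hna (e ▸ N1.a2)⟩
  have htK' : t' ∈ K := (memK t').mpr ⟨htB', N1.a3.ne.symm, fun e => hna (e ▸ N1.a3)⟩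
  have k1 : w1 ∉ K := by simp [hK]
  have k2 : w2 ∉ K := by simp [hK]
  have hY : Y4 G K w1 w2 s t s' t' := by
    refine ⟨fun K' h1 h2 => h.sub K' (h1.trans Finset.sdiff_subset) h2
      (fun e => k1 (h1 (e ▸ h.hw1))), k1, k2, hw, hsK, htK, hsK', htK', N2.n3, n2, n3, n4, n5, N1.n3,
      N2.a2.symm, N2.a3.symm, N1.a2.symm, N1.a3.symm, ?_⟩
    intro x hx z hz hxz
    have hx' := (memK x).mp hx
    have hzB : z ∈ B := h.mem hx'.1 hxz (Or.inl hx'.2.1) (Or.inl hx'.2.2)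
    have : z = w1 ∨ z = w2 := by
      by_contra hcon
      push Not at hcon
      exact hz ((memK z).mpr ⟨hzB, hcon⟩)
    rcases this with rfl | rfl
    · rcases (N1.adj x).mp hxz.symm with e | e | e
      · exact absurd (e ▸ hx'.1) h.ho1
      · exact Or.inr ⟨rfl, Or.inl e⟩
      · exact Or.inr ⟨rfl, Or.inr e⟩
    · rcases (N2.adj x).mp hxz.symm with e | e | e
      · exact absurd (e ▸ hx'.1) h.ho2
      · exact Or.inl ⟨rfl, Or.inl e⟩
      · exact Or.inl ⟨rfl, Or.inr e⟩
  obtain ⟨F, hF, hpq, ⟨a, hsa, ha⟩, ⟨d, htd, hd⟩⟩ := hY.main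
  have hsum := cutsum t_two hF.fl
  rw [hY.bsum] at hsum
  have bp := hF.bd s hsK w2 N2.a2.symm k2
  have bq := hF.bd t htK w2 N2.a3.symm k2
  have by1 := hF.bd s' hsK' w1 N1.a2.symm k1
  have by2 := hF.bd t' htK' w1 N1.a3.symm k1
  have np := hF.nz s hsK w2 N2.a2.symm
  have nq := hF.nz t htK w2 N2.a3.symm
  have ny1 := hF.nz s' hsK' w1 N1.a2.symm
  have ny2 := hF.nz t' htK' w1 N1.a3.symm
  obtain ⟨a', Ns⟩ := hc.nb2 N2.a2.symm hsa (fun e => ha (e ▸ bp))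
  obtain ⟨d', Nt⟩ := hc.nb2 N2.a3.symm htd (fun e => hd (e ▸ bq))
  have fs := hF.fl s hsK
  have ft := hF.fl t htK
  rw [Ns.bs] at fs
  rw [Nt.bs] at ft
  obtain ⟨x, x0, xa, xa', xd, xd'⟩ := dist_dec _ _ bp bq np nq hpq _ _ ha hd
  rw [← t_sum _ _ _ fs] at xa'
  rw [← t_sum _ _ _ ft] at xd'
  have ha' : (F s(s, a')).1 ≠ 0 := by
    rw [t_sum _ _ _ fs, Prod.fst_add, bp, add_zero]; exact ha
  have hd' : (F s(t, d')).1 ≠ 0 := by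
    rw [t_sum _ _ _ ft, Prod.fst_add, bq, add_zero]; exact hd
  have hyy := two_dec _ _ bp bq np nq hpq _ _ by1 by2 ny1 ny2 hsum
  set p := F s(s, w2)
  set q := F s(t, w2)
  have o11 : o1 ≠ w1 := N1.a1.ne.symm
  have o12 : o1 ≠ w2 := fun e => h.ho1 (e ▸ h.hw2)
  have o22 : o2 ≠ w2 := N2.a1.ne.symm
  have o21 : o2 ≠ w1 := fun e => h.ho2 (e ▸ h.hw1)
  set c : Sym2 V → T := fun e => if e = s(w1, o1) then p + q else if e = s(w2, o2) then x
    else F e with hcd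
  have cK : ∀ x ∈ K, ∀ z, c s(x, z) = F s(x, z) := by
    intro x hx z
    have hx' := (memK x).mp hx
    have x1 : x ≠ o1 := fun e => h.ho1 (e ▸ hx'.1)
    have x2 : x ≠ o2 := fun e => h.ho2 (e ▸ hx'.1)
    simp [hcd, hx'.2.1, hx'.2.2, x1, x2]
  have e3 : c s(w1, o1) = p + q := by simp [hcd]
  have e4 : c s(w2, o2) = x := by simp [hcd, hw.symm, o12.symm]
  have e5 : c s(w1, t') = F s(t', w1) := by rw [Sym2.eq_swap]; exact cK _ htK' _
  have e8 : c s(w1, s') = F s(s', w1) := by rw [Sym2.eq_swap]; exact cK _ hsK' _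
  have e6 : c s(w2, t) = q := by rw [Sym2.eq_swap]; exact cK _ htK _
  have e1 : c s(w2, s) = p := by rw [Sym2.eq_swap]; exact cK _ hsK _
  have BA : B = insert w2 (insert w1 K) := by
    exact ba2 memK h.hw1 h.hw2
  have pq0 : p + q ≠ 0 := by
    intro h0
    apply hpq
    have := t_sum' (a := p) (b := q) (d := 0) (by rw [add_zero]; exact h0)
    rwa [add_zero] at this
  have xx : ∀ z : T, z.1 = 0 → x ≠ z := fun z hz => fst_ne (by rw [hz]; exact x0)
  have hcol : Col G B c := by
    rw [BA]
    refine fin_col hc (A := insert w1 K) ?_ ?_ (BA ▸ h.ho2) N2 Ns Nt (by simp [hsK]) (by simp [htK])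
      ?_ ?_ ?_ ?_ ?_ ?_ ?_ ?_ ?_ ?_ ?_ ?_
    · intro v hv
      simp only [Finset.mem_insert] at hv
      rcases hv with rfl | hv
      · rw [N1.bs, e3, e8, e5]; exact hsum
      · rw [← hF.fl v hv]
        refine bs_congr ?_
        intro x hx y _ _
        rw [Finset.mem_singleton.mp hx]
        exact cK _ hv _
    · intro v hv z hz
      simp only [Finset.mem_insert] at hv
      rcases hv with rfl | hv
      · rcases (N1.adj z).mp hz with rfl | rfl | rfl
        · rw [e3]; exact pq0
        · rw [e8]; exact ny1
        · rw [e5]; exact ny2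
      · rw [cK _ hv]; exact hF.nz v hv z hz
    · rw [e4]; exact xx _ rfl
    · rw [e4, e1]; exact xx _ bp
    · rw [e4, e6]; exact xx _ bq
    · rw [e1, e6]; exact hpq
    · rw [e4, cK _ hsK]; exact xa
    · rw [e4, cK _ hsK]; exact xa'
    · rw [e6, cK _ hsK]; exact fst_ne (by rw [bq]; exact ha.symm)
    · rw [e6, cK _ hsK]; exact fst_ne (by rw [bq]; exact ha'.symm)
    · rw [e4, cK _ htK]; exact xd
    · rw [e4, cK _ htK]; exact xd'
    · rw [e1, cK _ htK]; exact fst_ne (by rw [bp]; exact hd.symm)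
    · rw [e1, cK _ htK]; exact fst_ne (by rw [bp]; exact hd'.symm)
  have g1 : p + q ≠ x := (xx _ (by rw [Prod.fst_add, bp, bq, add_zero])).symm
  have g2 : p + q ≠ p := fun e => nq (by simpa using e)
  have g3 : p + q ≠ q := fun e => np (by simpa using e)
  rcases hyy with ⟨y1, y2⟩ | ⟨y1, y2⟩
  · refine ⟨c, s', t', hcol, N1, N2, ?_, ?_, ?_, ?_, ?_, Or.inl ?_⟩
    · rw [e3, e4]; exact g1
    · rw [e3, e1]; exact g2
    · rw [e3, e6]; exact g3
    · rw [e4, e8]; exact xx _ by1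
    · rw [e4, e5]; exact xx _ by2
    · rw [e8, e1, e5, e6]; exact ⟨y1, y2⟩
  · refine ⟨c, t', s', hcol, N1.sw, N2, ?_, ?_, ?_, ?_, ?_, Or.inl ?_⟩
    · rw [e3, e4]; exact g1
    · rw [e3, e1]; exact g2
    · rw [e3, e6]; exact g3
    · rw [e4, e5]; exact xx _ by2
    · rw [e4, e8]; exact xx _ by1
    · rw [e8, e1, e5, e6]; exact ⟨y2, y1⟩

lemma End.all (hc : Cub G) {B : Finset V} {w1 w2 o1 o2 : V} (h : End G B w1 w2 o1 o2) :
    ∃ c s' t' s t, ECl G B c w1 w2 o1 o2 s' t' s t := by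
  obtain ⟨s', t', N1⟩ := hc.nb1 h.a1
  obtain ⟨s, t, N2⟩ := hc.nb1 h.a2
  by_cases n2 : s = s'
  · subst n2
    obtain ⟨c, hh⟩ := h.tri hc N1 N2
    exact ⟨_, _, _, _, _, hh⟩
  by_cases n3 : s = t'
  · subst n3
    obtain ⟨c, hh⟩ := h.tri hc N1.sw N2
    exact ⟨_, _, _, _, _, hh⟩
  by_cases n4 : t = s'
  · subst n4
    obtain ⟨c, hh⟩ := h.tri hc N1 N2.sw
    exact ⟨_, _, _, _, _, hh⟩
  by_cases n5 : t = t'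
  · subst n5
    obtain ⟨c, hh⟩ := h.tri hc N1.sw N2.sw
    exact ⟨_, _, _, _, _, hh⟩
  obtain ⟨c, _, _, hh⟩ := h.dis hc N1 N2 n2 n3 n4 n5
  exact ⟨_, _, _, _, _, hh⟩

end ends
end NC

set_option linter.unusedSectionVars false
namespace NC
section main
variable {V : Type*} [Fintype V] [DecidableEq V] {G : SimpleGraph V} [DecidableRel G.Adj]

lemma glueEnd {A B : Finset V} {F c : Sym2 V → T} (hd : Disjoint A B)
    (hF : Col G A F) (hB : Col G B c) {w1 w2 o1 o2 s' t' s t a b d e : V}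
    (hbd : ∀ x ∈ A, ∀ y ∈ B, G.Adj x y → (x = o1 ∧ y = w1) ∨ (x = o2 ∧ y = w2))
    (N1 : Nb G w1 o1 s' t') (N2 : Nb G w2 o2 s t)
    (M1 : Nb G o1 w1 a b) (M2 : Nb G o2 w2 d e)
    (e1 : c s(w1, o1) = F s(o1, w1)) (e2 : c s(w2, o2) = F s(o2, w2))
    (q1 : sim (c s(w1, s')) (c s(w1, t')) (F s(o1, a)) (F s(o1, b)))
    (q2 : sim (c s(w2, s)) (c s(w2, t)) (F s(o2, d)) (F s(o2, e))) :
    ∃ c, Col G (A ∪ B) c := by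
  refine Col.glue hd hF hB ?_ ?_
  · intro x hx y hy hxy
    rcases hbd x hx y hy hxy with ⟨rfl, rfl⟩ | ⟨rfl, rfl⟩
    · rw [← e1, Sym2.eq_swap]
    · rw [← e2, Sym2.eq_swap]
  · intro x hx y hy hxy
    rcases hbd x hx y hy hxy with ⟨rfl, rfl⟩ | ⟨rfl, rfl⟩
    · obtain ⟨p1, p2, p3, -⟩ := hF.ne hx M1
      obtain ⟨r1, r2, r3, -⟩ := hB.ne hy N1
      rw [Finset.union_comm, M1.sc, N1.sc]
      rw [e1] at r1 r2 ⊢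
      exact nrm r1 r2 r3 p1 p2 p3 q1
    · obtain ⟨p1, p2, p3, -⟩ := hF.ne hx M2
      obtain ⟨r1, r2, r3, -⟩ := hB.ne hy N2
      rw [Finset.union_comm, M2.sc, N2.sc]
      rw [e2] at r1 r2 ⊢
      exact nrm r1 r2 r3 p1 p2 p3 q2

lemma dd0 (hc : Cub G) {X : Finset V} (hX : ∀ K ⊆ X, K.Nonempty → K ≠ X → 2 ≤ dd G K)
    (h0 : dd G X = 0) : ∃ c, Col G X c := by
  by_cases hne : X = ∅
  · subst hne
    exact ⟨fun _ => 0, by simp, by simp, by simp⟩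
  obtain ⟨v, hv⟩ := Finset.nonempty_iff_ne_empty.mpr hne
  have hin : ∀ x ∈ X, ∀ y, G.Adj x y → y ∈ X := by
    intro x hx y hxy
    by_contra hy
    have := ec_ge (G := G) X Xᶜ {(x, y)} (by
      intro p hp
      rw [Finset.mem_singleton.mp hp]
      exact ⟨hx, by simpa using hy, hxy⟩)
    unfold dd at h0
    simp at this
    omega
  set Y : Finset V := X \ {v} with hY
  have hvY : v ∉ Y := by simp [hY]
  have memY : ∀ x, x ∈ Y ↔ x ∈ X ∧ x ≠ v := by intro x; simp [hY]
  obtain ⟨F, hF⟩ := L1' (G := G) Y (fun K h h' => hX K (h.trans Finset.sdiff_subset) h'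
    (fun e => hvY (h (e ▸ hv))))
  refine ⟨F, fl_col hc ?_ ?_⟩
  · intro x hx
    by_cases hxv : x = v
    · subst hxv
      have h1 := cutsum t_two hF.fl
      have e1 : Yᶜ = {x} ∪ Xᶜ := by
        ext z
        have := memY z
        have i : z = x → z ∈ X := fun e => e ▸ hx
        simp only [Finset.mem_compl, Finset.mem_union, Finset.mem_singleton]
        tauto
      have d1 : Disjoint ({x} : Finset V) Xᶜ := by simpa using hx
      rw [e1, bs_union_right _ _ d1, bs_zero (B := Xᶜ), add_zero, bs_comm] at h1
      · have e2 : (Finset.univ : Finset V) = Y ∪ Yᶜ := by simp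
        rw [e2, bs_union_right _ _ disjoint_compl_right, h1, zero_add]
        refine bs_zero ?_
        intro z hz w hw hzw
        rw [Finset.mem_singleton.mp hz] at hzw
        exact absurd ((memY w).mpr ⟨hin x hx w hzw, hzw.ne.symm⟩) (Finset.mem_compl.mp hw)
      · intro z hz w hw hzw
        exact absurd (hin z ((memY z).mp hz).1 w hzw) (Finset.mem_compl.mp hw)
    · exact hF.fl x ((memY x).mpr ⟨hx, hxv⟩)
  · intro x hx w hxw
    by_cases hxv : x = v
    · subst hxv
      rw [Sym2.eq_swap]
      exact hF.nz w ((memY w).mpr ⟨hin x hx w hxw, hxw.ne.symm⟩) x hxw.symm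
    · exact hF.nz x ((memY x).mpr ⟨hx, hxv⟩) w hxw

lemma dd1 (hc : Cub G) {X : Finset V} (hX : ∀ K ⊆ X, K.Nonempty → K ≠ X → 2 ≤ dd G K)
    (h1 : dd G X = 1) : ∃ c, Col G X c := by
  obtain ⟨u, hu, o, ho, huo, -⟩ := ec_gt (G := G) X Xᶜ ∅ (by unfold dd at h1; simp; omega)
  have huniq : ∀ x ∈ X, ∀ y, y ∉ X → G.Adj x y → u = x ∧ o = y := by
    intro x hx y hy hxy
    exact ec_le_one (by unfold dd at h1; omega) hu ho huo hx (by simpa using hy) hxy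
  obtain ⟨_, _, hNu⟩ := hc.nb1 huo
  have d3 := hNu.dd
  have hXu : dd G (X \ {u}) = 2 := by
    have e1 := dd_union (G := G) (A := {u}) (B := X \ {u}) Finset.disjoint_sdiff
    have hs : {u} ⊆ X := by simpa using hu
    rw [Finset.union_sdiff_of_subset hs] at e1
    have e2 := dd_sub (G := G) hs
    have e3 : ec G {u} Xᶜ ≤ ec G X Xᶜ := ec_mono hs subset_rfl
    have e4 := ec_ge (G := G) {u} Xᶜ {(u, o)} (by
      intro p hp
      rw [Finset.mem_singleton.mp hp]
      exact ⟨by simp, ho, huo⟩)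
    simp at e4
    unfold dd at h1 d3 e1 e2 ⊢
    omega
  have hXne : (X \ {u}).Nonempty := by
    rw [Finset.nonempty_iff_ne_empty]
    intro h
    rw [h] at hXu
    simp [dd, ec, bs] at hXu
  obtain ⟨B, hB, hmin⟩ := Finset.exists_min_image
    (Finset.univ.filter fun B : Finset V => B ⊆ X \ {u} ∧ B.Nonempty ∧ dd G B = 2) Finset.card
    ⟨X \ {u}, by simp only [Finset.mem_filter, Finset.mem_univ, true_and]; exact ⟨subset_rfl, hXne, hXu⟩⟩
  simp only [Finset.mem_filter, Finset.mem_univ, true_and] at hB hmin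
  obtain ⟨hBX, hBne, hB2⟩ := hB
  have hBX' : B ⊆ X := hBX.trans Finset.sdiff_subset
  have huB : u ∉ B := fun h => by simpa using (Finset.mem_sdiff.mp (hBX h)).2
  have hout : ∀ x ∈ B, ∀ y, G.Adj x y → y ∈ X := by
    intro x hx y hxy
    by_contra hy
    exact huB ((huniq x (hBX' hx) y hy hxy).1 ▸ hx)
  obtain ⟨w1, hw1, o1, ho1, ha1, -⟩ := ec_gt (G := G) B Bᶜ ∅ (by unfold dd at hB2; simp; omega)
  obtain ⟨w2, hw2, o2, ho2, ha2, hne⟩ := ec_gt (G := G) B Bᶜ {(w1, o1)} (by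
    unfold dd at hB2; simp; omega)
  rw [Finset.mem_compl] at ho1 ho2
  have hE : End G B w1 w2 o1 o2 := by
    refine ⟨hB2, ?_, hw1, hw2, ho1, ho2, ha1, ha2, fun h => hne (by simp [h])⟩
    intro K hK hKne hKB
    have h2 := hX K (hK.trans hBX') hKne (fun e => huB (hK (e ▸ hu)))
    by_contra hlt
    have := hmin K ⟨hK.trans hBX, hKne, by omega⟩
    exact absurd (Finset.card_lt_card (Finset.ssubset_iff_subset_ne.mpr ⟨hK, hKB⟩)) (by omega)
  set A : Finset V := X \ B with hA
  have memA : ∀ x, x ∈ A ↔ x ∈ X ∧ x ∉ B := by intro x; simp [hA]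
  have ho1A : o1 ∈ A := (memA _).mpr ⟨hout w1 hw1 o1 ha1, ho1⟩
  have ho2A : o2 ∈ A := (memA _).mpr ⟨hout w2 hw2 o2 ha2, ho2⟩
  have huA : u ∈ A := (memA _).mpr ⟨hu, huB⟩
  have hAX : A ⊆ X := Finset.sdiff_subset
  have hdis : Disjoint A B := Finset.sdiff_disjoint
  have hAB : A ∪ B = X := Finset.sdiff_union_of_subset hBX'
  have hoA : o ∉ A := fun h => (Finset.mem_compl.mp ho) (hAX h)
  have hw1A : w1 ∉ A := fun h => ((memA _).mp h).2 hw1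
  have hw2A : w2 ∉ A := fun h => ((memA _).mp h).2 hw2
  obtain ⟨F, hF⟩ := L1' (G := G) A (fun K h h' => hX K (h.trans hAX) h' (by
    rintro rfl
    exact hw1A (h (hBX' hw1))))
  have hw1o : w1 ≠ o := fun e => (Finset.mem_compl.mp ho) (e ▸ hBX' hw1)
  have hw2o : w2 ≠ o := fun e => (Finset.mem_compl.mp ho) (e ▸ hBX' hw2)
  have hww := hE.wne hc
  have hbd : ∀ x ∈ A, ∀ y ∈ B, G.Adj x y → (x = o1 ∧ y = w1) ∨ (x = o2 ∧ y = w2) := by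
    intro x hx y hy hxy
    have := hE.bd hy ((memA x).mp hx).2 hxy.symm
    tauto
  have hfg : F s(o1, w1) ≠ F s(o2, w2) := by
    have hsum := cutsum t_two hF.fl
    rw [bs_pairs F {(o1, w1), (o2, w2), (u, o)}] at hsum
    · rw [Finset.sum_insert (by simp [hww, hw1o]), Finset.sum_pair (by simp [hw2o])] at hsum
      simp only at hsum
      intro e
      rw [e, ← add_assoc, t_two, zero_add] at hsum
      exact hF.nz u huA o huo hsum
    · intro x hx y hy hxy
      rw [Finset.mem_compl] at hy
      simp only [Finset.mem_insert, Finset.mem_singleton, Prod.mk.injEq]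
      by_cases hyX : y ∈ X
      · have hyB : y ∈ B := by_contra fun h => hy ((memA y).mpr ⟨hyX, h⟩)
        rcases hbd x hx y hyB hxy with h | h
        · exact Or.inl h
        · exact Or.inr (Or.inl h)
      · obtain ⟨rfl, rfl⟩ := huniq x (hAX hx) y hyX hxy
        exact Or.inr (Or.inr ⟨rfl, rfl⟩)
    · intro p hp
      simp only [Finset.mem_insert, Finset.mem_singleton] at hp
      simp only [Finset.mem_compl]
      rcases hp with rfl | rfl | rfl
      · exact ⟨ho1A, hw1A, ha1.symm⟩
      · exact ⟨ho2A, hw2A, ha2.symm⟩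
      · exact ⟨huA, hoA, huo⟩
  have hFc := hF.col hc
  obtain ⟨a, b, M1⟩ := hc.nb1 ha1.symm
  obtain ⟨d, e, M2⟩ := hc.nb1 ha2.symm
  have fl1 := hF.fl o1 ho1A
  have fl2 := hF.fl o2 ho2A
  rw [M1.bs] at fl1
  rw [M2.bs] at fl2
  have fl1' := t_sum _ _ _ fl1
  have fl2' := t_sum _ _ _ fl2
  obtain ⟨p1, p2, p3, p4, p5, p6⟩ := hFc.ne ho1A M1
  obtain ⟨r1, r2, r3, r4, r5, r6⟩ := hFc.ne ho2A M2
  obtain ⟨c, s', t', s, t, hC⟩ := hE.all hc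
  obtain ⟨i1, i2, i3, i4, i5, i6⟩ := hC.col.ne hw1 hC.N1
  obtain ⟨j1, j2, j3, j4, j5, j6⟩ := hC.col.ne hw2 hC.N2
  have x0 := hC.x
  have x1 := hC.x1
  have x1' := hC.x1'
  have x2 := hC.x2
  have x2' := hC.x2'
  rw [← hAB]
  rcases hC.alt with ⟨al1, al2⟩ | ⟨al1, al2, al3, al4⟩
  · obtain ⟨i, ⟨hi0, hif, hig⟩, j, ⟨hj0, hjf, hjg, hij⟩, hs1, hs2⟩ :=
      patA _ _ _ p4 r4 hfg p5 p1.symm _ r5 r1.symm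
    rw [← fl1'] at hs1
    rw [← fl2'] at hs2
    obtain ⟨σ, hσ⟩ := perm_ext ![0, c s(w1, o1), c s(w2, o2), c s(w1, s'), c s(w1, t')]
      ![0, F s(o1, w1), F s(o2, w2), i, j] (by
        intro m n
        fin_cases m <;> fin_cases n <;> simp [i1, i2, i3, i4, i5, i6, Ne.symm i1, Ne.symm i2,
          Ne.symm i3, Ne.symm i4, Ne.symm i5, Ne.symm i6, j4, Ne.symm j4, x0, x2, x2', Ne.symm x0,
          Ne.symm x2, Ne.symm x2']) (by
        intro m n
        fin_cases m <;> fin_cases n <;> simp [hi0, hif, hig, hj0, hjf, hjg, hij, p4, r4, hfg,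
          Ne.symm hi0, Ne.symm hif, Ne.symm hig, Ne.symm hj0, Ne.symm hjf, Ne.symm hjg, Ne.symm hij,
          Ne.symm p4, Ne.symm r4, Ne.symm hfg])
    have s0 := hσ 0
    have s1 := hσ 1
    have s2 := hσ 2
    have s3 := hσ 3
    have s4 := hσ 4
    simp at s0 s1 s2 s3 s4
    refine glueEnd hdis hFc (hC.col.perm σ s0) hbd hC.N1 hC.N2 M1 M2 s1 s2 ?_ ?_
    · simp only [s3, s4]; exact hs1
    · simp only [← al1, ← al2, s3, s4]; exact hs2
  · obtain ⟨i, ⟨hi0, hif, hig⟩, j, ⟨⟨hj0, hjf, hjg, hij⟩, hs1⟩, k, ⟨hk0, hkf, hkg, hki, hkj⟩, l,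
      ⟨hl0, hlf, hlg, hli, hlj, hkl⟩, hs2⟩ :=
      patB _ _ _ p4 r4 hfg p5 p1.symm _ r5 r1.symm
    rw [← fl1'] at hs1
    rw [← fl2'] at hs2
    obtain ⟨σ, hσ⟩ := perm_ext ![0, c s(w1, o1), c s(w2, o2), c s(w1, s'), c s(w1, t'), c s(w2, s),
        c s(w2, t)]
      ![0, F s(o1, w1), F s(o2, w2), i, j, k, l] (by
        intro m n
        fin_cases m <;> fin_cases n <;> simp [i1, i2, i3, i4, i5, i6, Ne.symm i1, Ne.symm i2,
          Ne.symm i3, Ne.symm i4, Ne.symm i5, Ne.symm i6, j1, j2, j3, j4, j5, j6, Ne.symm j1,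
          Ne.symm j2, Ne.symm j3, Ne.symm j4, Ne.symm j5, Ne.symm j6, x0, x2, x2', Ne.symm x0,
          Ne.symm x2, Ne.symm x2', x1, x1', Ne.symm x1, Ne.symm x1', al1, al2, al3, al4,
          Ne.symm al1, Ne.symm al2, Ne.symm al3, Ne.symm al4]) (by
        intro m n
        fin_cases m <;> fin_cases n <;> simp [hi0, hif, hig, hj0, hjf, hjg, hij, p4, r4, hfg,
          Ne.symm hi0, Ne.symm hif, Ne.symm hig, Ne.symm hj0, Ne.symm hjf, Ne.symm hjg, Ne.symm hij,
          Ne.symm p4, Ne.symm r4, Ne.symm hfg, hk0, hkf, hkg, hki, hkj, hl0, hlf, hlg, hli, hlj, hkl,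
          Ne.symm hk0, Ne.symm hkf, Ne.symm hkg, Ne.symm hki, Ne.symm hkj, Ne.symm hl0, Ne.symm hlf,
          Ne.symm hlg, Ne.symm hli, Ne.symm hlj, Ne.symm hkl])
    have s0 := hσ 0
    have s1 := hσ 1
    have s2 := hσ 2
    have s3 := hσ 3
    have s4 := hσ 4
    have s5 := hσ 5
    have s6 := hσ 6
    simp at s0 s1 s2 s3 s4 s5 s6
    refine glueEnd hdis hFc (hC.col.perm σ s0) hbd hC.N1 hC.N2 M1 M2 s1 s2 ?_ ?_
    · simp only [s3, s4]; exact hs1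
    · simp only [s5, s6]; exact hs2

lemma mainCol (hc : Cub G) (n : ℕ) : ∀ X : Finset V, X.card ≤ n → ∃ c, Col G X c := by
  induction n with
  | zero =>
    intro X hX
    have : X = ∅ := by simpa using hX
    subst this
    exact ⟨fun _ => 0, by simp, by simp, by simp⟩
  | succ n ih =>
    intro X hXn
    by_cases hs : ∃ A ⊆ X, A.Nonempty ∧ A ≠ X ∧ ec G A (X \ A) ≤ 1
    · obtain ⟨A, hA, hAne, hAX, he⟩ := hs
      have l1 : A.card < X.card := Finset.card_lt_card (Finset.ssubset_iff_subset_ne.mpr ⟨hA, hAX⟩)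
      have l2 : (X \ A).card < X.card := by
        have := Finset.card_sdiff_add_card_eq_card hA
        have := hAne.card_pos
        omega
      obtain ⟨c1, h1⟩ := ih A (by omega)
      obtain ⟨c2, h2⟩ := ih (X \ A) (by omega)
      have := Col.bridge hc Finset.disjoint_sdiff h1 h2 he
      rwa [Finset.union_sdiff_of_subset hA] at this
    · have hX : ∀ K ⊆ X, K.Nonempty → K ≠ X → 2 ≤ dd G K := by
        intro K hK hne hKX
        rw [dd_sub hK]
        by_contra hlt
        exact hs ⟨K, hK, hne, hKX, by omega⟩
      rcases Nat.lt_or_ge (dd G X) 2 with h | h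
      · have : dd G X = 0 ∨ dd G X = 1 := by omega
        rcases this with h | h
        · exact dd0 hc hX h
        · exact dd1 hc hX h
      · obtain ⟨F, hF⟩ := L1' (G := G) X (fun K hK hne => by
          by_cases hKX : K = X
          · rw [hKX]; exact h
          · exact hX K hK hne hKX)
        exact ⟨F, hF.col hc⟩

def nx : T → Fin 7 := fun x =>
  if x = (0, 0, 1) then 0 else if x = (0, 1, 0) then 1 else if x = (0, 1, 1) then 2 else
  if x = (1, 0, 0) then 3 else if x = (1, 0, 1) then 4 else if x = (1, 1, 0) then 5 else 6

lemma nx_inj : ∀ x y : T, x ≠ 0 → y ≠ 0 → nx x = nx y → x = y := by decide +kernel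

end main
end NC

theorem stmt_15 {V : Type*} [Fintype V] (G : SimpleGraph V) (hG : IsCubic G) :
    ∃ c : Sym2 V → Fin 7, IsNormalEdgeColoring G c := by
  classical
  have hc : NC.Cub G := by
    intro v
    obtain ⟨a, b, d, h1, h2, h3, h4⟩ := Set.ncard_eq_three.mp (hG v)
    refine ⟨a, b, d, h1, h2, h3, fun w => ?_⟩
    have : w ∈ G.neighborSet v ↔ w ∈ ({a, b, d} : Set V) := by rw [h4]
    simpa using this
  obtain ⟨c, hC⟩ := NC.mainCol hc _ (Finset.univ : Finset V) le_rfl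
  have hcs : ∀ v, colorSet G (fun e => NC.nx (c e)) v =
      (((NC.Sc G c v).image NC.nx : Finset (Fin 7)) : Set (Fin 7)) := by
    intro v
    ext x
    simp only [colorSet, NC.Sc, Finset.coe_image, Set.mem_image, Finset.coe_filter,
      Finset.mem_univ, true_and, Set.mem_setOf_eq, exists_exists_and_eq_and]
    constructor
    · rintro ⟨e, he, rfl⟩
      obtain ⟨h1, h2⟩ := he
      obtain ⟨w, rfl⟩ := Sym2.mem_iff_exists.mp h2
      exact ⟨w, h1, rfl⟩
    · rintro ⟨w, hw, rfl⟩
      exact ⟨s(v, w), ⟨hw, by simp⟩, rfl⟩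
  have h0 : ∀ v, ∀ x ∈ NC.Sc G c v, x ≠ 0 := by
    intro v x hx e
    exact hC.nz v (Finset.mem_univ v) (e ▸ hx)
  refine ⟨fun e => NC.nx (c e), ?_, ?_⟩
  · rintro e he f hf hne ⟨v, hve, hvf⟩
    obtain ⟨x, rfl⟩ := Sym2.mem_iff_exists.mp hve
    obtain ⟨y, rfl⟩ := Sym2.mem_iff_exists.mp hvf
    have hx : G.Adj v x := he
    have hy : G.Adj v y := hf
    have hxy : x ≠ y := fun e => hne (by rw [e])
    obtain ⟨d, hN⟩ := hc.nb2 hx hy hxy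
    obtain ⟨h1, -, -, h2, h3, -⟩ := hC.ne (Finset.mem_univ v) hN
    exact fun e => h1 (NC.nx_inj _ _ h2 h3 e)
  · intro u v huv
    have key : (colorSet G (fun e => NC.nx (c e)) u ∪ colorSet G (fun e => NC.nx (c e)) v).ncard =
        (NC.Sc G c u ∪ NC.Sc G c v).card := by
      rw [hcs, hcs, ← Finset.coe_union, ← Finset.image_union, Set.ncard_coe_finset]
      refine Finset.card_image_of_injOn ?_
      intro x hx y hy e
      have g : ∀ z ∈ ((NC.Sc G c u ∪ NC.Sc G c v : Finset NC.T) : Set NC.T), z ≠ 0 := by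
        intro z hz
        rcases Finset.mem_union.mp (Finset.mem_coe.mp hz) with h | h
        · exact h0 _ _ h
        · exact h0 _ _ h
      exact NC.nx_inj _ _ (g x hx) (g y hy) e
    unfold IsPoorAt IsRichAt
    rw [key]
    exact hC.nm u (Finset.mem_univ u) v (Finset.mem_univ v) huv
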